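/- arXiv:2602.12067 — 4 statements merged into one kernel-verified Lean document; each statement's English description precedes it below -/
import Mathlib

section
/- There exists a constant C > 0, independent of x and q, such that for every x ∈ (0,∞) and every q ∈ ℝ³ one has I₂^{(q)}(x) ≤ C (x^{−2} + x³)/(1 + |q|⁴). -/
open MeasureTheory
open scoped ENNReal

noncomputable abbrev E3 := EuclideanSpace ℝ (Fin 3)

/-- The Belyakov-type integral `I₂^{(q)}(x)` of Lemma B.2, with the Dirac deltas
`δ(r-q)` and `δ(r+p-q)` evaluated explicitly. -/
noncomputable def belyakovI2q (x : ℝ) (q : E3) : ℝ≥0∞ :=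
  ∫⁻ p : E3,
    ({p : E3 | ‖q‖ < 1 ∧ 1 < ‖q + p‖}.indicator
      (fun p => ∫⁻ r' in {r' : E3 | ‖r'‖ < x ∧ x < ‖r' - p‖},
        ENNReal.ofReal (1 / (‖q + p‖ ^ 2 - ‖q‖ ^ 2 + ‖r' - p‖ ^ 2 - ‖r'‖ ^ 2) ^ 2)) p)
    +
    ({p : E3 | ‖q - p‖ < 1 ∧ 1 < ‖q‖}.indicator
      (fun p => ∫⁻ r' in {r' : E3 | ‖r'‖ < x ∧ x < ‖r' - p‖},
        ENNReal.ofReal (1 / (‖q‖ ^ 2 - ‖q - p‖ ^ 2 + ‖r' - p‖ ^ 2 - ‖r'‖ ^ 2) ^ 2)) p)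


/-! ### The inner integral -/

lemma bely_annulus (A B : ℝ) :
    volume {y : Fin 2 → ℝ | A < y 0 ^ 2 + y 1 ^ 2 ∧ y 0 ^ 2 + y 1 ^ 2 < B}
      ≤ ENNReal.ofReal (Real.pi * (B - A)) := by
  have hmeas : MeasurableSet {y : Fin 2 → ℝ | A < y 0 ^ 2 + y 1 ^ 2 ∧ y 0 ^ 2 + y 1 ^ 2 < B} := by
    apply IsOpen.measurableSet
    refine IsOpen.and (isOpen_lt ?_ ?_) (isOpen_lt ?_ ?_) <;> fun_prop
  rw [← (PiLp.volume_preserving_ofLp (Fin 2)).measure_preimage hmeas.nullMeasurableSet]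
  have hpi := Real.pi_pos
  rcases le_or_gt B 0 with hB | hB
  · have : (WithLp.ofLp (p := 2) (V := Fin 2 → ℝ)) ⁻¹'
        {y : Fin 2 → ℝ | A < y 0 ^ 2 + y 1 ^ 2 ∧ y 0 ^ 2 + y 1 ^ 2 < B} = ∅ := by
      ext y
      simp only [Set.mem_preimage, Set.mem_ofPred_eq, Set.mem_empty_iff_false, iff_false]
      rintro ⟨-, h⟩
      nlinarith [sq_nonneg (y 0), sq_nonneg (y 1)]
    rw [this]; simp
  have hn : ∀ y : EuclideanSpace ℝ (Fin 2), ‖y‖ ^ 2 = y 0 ^ 2 + y 1 ^ 2 := by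
    intro y
    rw [EuclideanSpace.norm_sq_eq]; simp [Fin.sum_univ_two]
  rcases lt_or_ge A 0 with hA | hA
  · refine (measure_mono (t := Metric.ball (0 : EuclideanSpace ℝ (Fin 2)) (Real.sqrt B)) ?_).trans ?_
    · rintro y ⟨-, h⟩
      rw [← hn] at h
      rw [mem_ball_zero_iff]
      exact Real.lt_sqrt_of_sq_lt h
    · rw [EuclideanSpace.volume_ball_fin_two, ← ENNReal.ofReal_pow (Real.sqrt_nonneg _),
        Real.sq_sqrt hB.le, ← ENNReal.ofReal_mul hB.le]
      apply ENNReal.ofReal_le_ofReal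
      nlinarith
  · rcases le_or_gt B A with hBA | hBA
    · have : (WithLp.ofLp (p := 2) (V := Fin 2 → ℝ)) ⁻¹'
          {y : Fin 2 → ℝ | A < y 0 ^ 2 + y 1 ^ 2 ∧ y 0 ^ 2 + y 1 ^ 2 < B} = ∅ := by
        ext y
        simp only [Set.mem_preimage, Set.mem_ofPred_eq, Set.mem_empty_iff_false, iff_false]
        rintro ⟨h', h⟩
        linarith
      rw [this]; simp
    refine (measure_mono (t := Metric.ball (0 : EuclideanSpace ℝ (Fin 2)) (Real.sqrt B) \
      Metric.closedBall 0 (Real.sqrt A)) ?_).trans ?_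
    · rintro y ⟨h', h⟩
      rw [← hn] at h h'
      refine ⟨?_, ?_⟩
      · rw [mem_ball_zero_iff]
        exact Real.lt_sqrt_of_sq_lt h
      · rw [mem_closedBall_zero_iff, not_le]
        exact (Real.sqrt_lt' (by
          rcases (norm_nonneg y).eq_or_lt with h0 | h0
          · rw [← h0] at h'; nlinarith
          · exact h0)).2 h'
    · rw [measure_sdiff (Metric.closedBall_subset_ball (Real.sqrt_lt_sqrt hA hBA))
        Metric.isClosed_closedBall.measurableSet.nullMeasurableSet
        (measure_closedBall_lt_top).ne, EuclideanSpace.volume_ball_fin_two,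
        EuclideanSpace.volume_closedBall_fin_two, ← ENNReal.ofReal_pow (Real.sqrt_nonneg _),
        ← ENNReal.ofReal_pow (Real.sqrt_nonneg _),
        Real.sq_sqrt hB.le, Real.sq_sqrt hA, ← ENNReal.ofReal_mul hB.le, ← ENNReal.ofReal_mul hA,
        ← ENNReal.ofReal_sub _ (by positivity)]
      apply ENNReal.ofReal_le_ofReal
      nlinarith

/-- The inner integral. -/
noncomputable def belyJ (x a : ℝ) (p : E3) : ℝ≥0∞ :=
  ∫⁻ r' in {r' : E3 | ‖r'‖ < x ∧ x < ‖r' - p‖},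
    ENNReal.ofReal (1 / (a + ‖r' - p‖ ^ 2 - ‖r'‖ ^ 2) ^ 2)

lemma bely_meas (x : ℝ) (p : E3) : MeasurableSet {r' : E3 | ‖r'‖ < x ∧ x < ‖r' - p‖} := by
  apply IsOpen.measurableSet
  refine IsOpen.and (isOpen_lt ?_ ?_) (isOpen_lt ?_ ?_) <;> fun_prop

lemma belyJ_far (x a m : ℝ) (p : E3) (hx : 0 < x) (hm : 0 < m) (hma : m ≤ a) :
    belyJ x a p ≤ ENNReal.ofReal (1 / m ^ 2 * (x ^ 3 * (Real.pi * 4 / 3))) := by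
  have hpi := Real.pi_pos
  unfold belyJ
  calc _ ≤ ∫⁻ r' in {r' : E3 | ‖r'‖ < x ∧ x < ‖r' - p‖}, ENNReal.ofReal (1 / m ^ 2) := by
        apply setLIntegral_mono' (bely_meas x p)
        rintro r ⟨h1, h2⟩
        apply ENNReal.ofReal_le_ofReal
        apply one_div_le_one_div_of_le (by positivity)
        have : ‖r‖ ^ 2 ≤ ‖r - p‖ ^ 2 := by gcongr; linarith
        gcongr
        linarith
    _ ≤ ∫⁻ r' in Metric.ball (0 : E3) x, ENNReal.ofReal (1 / m ^ 2) := by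
        apply lintegral_mono_set
        rintro r ⟨h1, h2⟩
        simpa using h1
    _ = _ := by
        rw [setLIntegral_const, EuclideanSpace.volume_ball_fin_three,
          ENNReal.ofReal_mul (by positivity), ENNReal.ofReal_mul (by positivity),
          ENNReal.ofReal_pow hx.le]

lemma belyJ_rot (x a : ℝ) (p : E3) (R : E3 ≃ₗᵢ[ℝ] E3) : belyJ x a p = belyJ x a (R p) := by
  unfold belyJ
  rw [← lintegral_indicator (bely_meas _ _), ← lintegral_indicator (bely_meas _ _)]
  rw [← R.measurePreserving.lintegral_comp_emb R.toHomeomorph.measurableEmbedding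
    ({r' : E3 | ‖r'‖ < x ∧ x < ‖r' - R p‖}.indicator _)]
  apply lintegral_congr
  intro r
  have h1 : ‖R r - R p‖ = ‖r - p‖ := by rw [← map_sub, R.norm_map]
  simp only [Set.indicator_apply, Set.mem_ofPred_eq, h1, R.norm_map]

lemma bely_rot_exists (p : E3) :
    ∃ R : E3 ≃ₗᵢ[ℝ] E3, R p = EuclideanSpace.single 0 (-‖p‖) := by
  refine ⟨_, Submodule.reflection_sub ?_⟩
  simp

/-- slice formula bound -/
lemma belyJ_slice (x a : ℝ) (p : E3) :
    belyJ x a p ≤ ∫⁻ s in Set.Ioo (-‖p‖ / 2) x,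
      ENNReal.ofReal (1 / (a + 2 * ‖p‖ * (s + ‖p‖ / 2)) ^ 2) *
        ENNReal.ofReal (Real.pi * (2 * ‖p‖ * (s + ‖p‖ / 2))) := by
  obtain ⟨R, hR⟩ := bely_rot_exists p
  rw [belyJ_rot x a p R, hR]
  set P := ‖p‖ with hP
  have hP0 : 0 ≤ P := norm_nonneg p
  set S : Set (ℝ × (Fin 2 → ℝ)) := {z | z.1 ^ 2 + (z.2 0 ^ 2 + z.2 1 ^ 2) < x ^ 2 ∧
    x ^ 2 < (z.1 + P) ^ 2 + (z.2 0 ^ 2 + z.2 1 ^ 2) ∧ 0 < x ∧ z.1 < x} with hS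
  have hSm : MeasurableSet S := by
    apply IsOpen.measurableSet
    refine IsOpen.and (isOpen_lt ?_ ?_) (IsOpen.and (isOpen_lt ?_ ?_)
      (IsOpen.and (isOpen_lt ?_ ?_) (isOpen_lt ?_ ?_))) <;> fun_prop
  let F : ℝ × (Fin 2 → ℝ) → ℝ≥0∞ := S.indicator (fun z =>
    ENNReal.ofReal (1 / (a + 2 * P * (z.1 + P / 2)) ^ 2))
  have hF : Measurable F := by
    apply Measurable.indicator _ hSm
    fun_prop
  have hmp : MeasurePreserving (fun r : E3 =>
      MeasurableEquiv.piFinSuccAbove (fun _ : Fin 3 => ℝ) 0 (WithLp.ofLp r)) :=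
    (volume_preserving_piFinSuccAbove (fun _ : Fin 3 => ℝ) 0).comp
      (PiLp.volume_preserving_ofLp (Fin 3))
  have step1 : belyJ x a (EuclideanSpace.single 0 (-P)) ≤ ∫⁻ z, F z := by
    rw [← hmp.lintegral_comp hF]
    unfold belyJ
    rw [← lintegral_indicator (bely_meas _ _)]
    apply lintegral_mono
    intro r
    apply Set.indicator_apply_le
    rintro ⟨h1, h2⟩
    have hx : 0 < x := (norm_nonneg r).trans_lt h1
    have e1 : ‖r‖ ^ 2 = r 0 ^ 2 + (r 1 ^ 2 + r 2 ^ 2) := by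
      rw [EuclideanSpace.norm_sq_eq]; simp [Fin.sum_univ_three]; ring
    have e2 : ‖r - EuclideanSpace.single 0 (-P)‖ ^ 2 = (r 0 + P) ^ 2 + (r 1 ^ 2 + r 2 ^ 2) := by
      rw [EuclideanSpace.norm_sq_eq]; simp [Fin.sum_univ_three]; ring
    have h1' : ‖r‖ ^ 2 < x ^ 2 := by gcongr
    have h2' : x ^ 2 < ‖r - EuclideanSpace.single 0 (-P)‖ ^ 2 := by gcongr
    rw [e1] at h1'
    rw [e2] at h2'
    have hmem : MeasurableEquiv.piFinSuccAbove (fun _ : Fin 3 => ℝ) 0 (WithLp.ofLp r) ∈ S := by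
      refine ⟨?_, ?_, hx, ?_⟩
      · simpa [Fin.tail] using h1'
      · simpa [Fin.tail] using h2'
      · have : r 0 < x := lt_of_pow_lt_pow_left₀ 2 hx.le (by nlinarith)
        simpa using this
    simp only [F]
    rw [Set.indicator_of_mem hmem, e1, e2]
    apply le_of_eq
    congr 3
    simp
    ring
  refine step1.trans ?_
  rw [Measure.volume_eq_prod, lintegral_prod _ hF.aemeasurable,
    ← lintegral_indicator measurableSet_Ioo]
  apply lintegral_mono
  intro s
  simp only
  by_cases hs : s ∈ Set.Ioo (-P / 2) x
  · rw [Set.indicator_of_mem hs]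
    calc ∫⁻ y, F (s, y) ≤ ∫⁻ y in {y : Fin 2 → ℝ | x ^ 2 - (s + P) ^ 2 < y 0 ^ 2 + y 1 ^ 2 ∧
          y 0 ^ 2 + y 1 ^ 2 < x ^ 2 - s ^ 2},
          ENNReal.ofReal (1 / (a + 2 * P * (s + P / 2)) ^ 2) := by
          rw [← lintegral_indicator]
          · apply lintegral_mono
            intro y
            change S.indicator (fun z => ENNReal.ofReal (1 / (a + 2 * P * (z.1 + P / 2)) ^ 2)) (s, y)
              ≤ _
            rw [Set.indicator_apply]
            split_ifs with hmem
            swap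
            · exact zero_le
            revert hmem
            rintro ⟨h1, h2, -, -⟩
            rw [Set.indicator_of_mem]
            simp only at h1 h2
            constructor <;> linarith
          · apply IsOpen.measurableSet
            refine IsOpen.and (isOpen_lt ?_ ?_) (isOpen_lt ?_ ?_) <;> fun_prop
      _ ≤ _ := by
          rw [setLIntegral_const]
          gcongr
          refine (bely_annulus _ _).trans (ENNReal.ofReal_le_ofReal (le_of_eq ?_))
          ring
  · rw [Set.indicator_of_notMem hs]
    rw [nonpos_iff_eq_zero, lintegral_eq_zero_of_ae_eq_zero]
    filter_upwards with y
    apply Set.indicator_of_notMem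
    rintro ⟨h1, h2, hx, h3⟩
    simp only at h1 h2 h3
    apply hs
    refine ⟨?_, h3⟩
    by_contra hc
    push Not at hc
    nlinarith

lemma bely_int (c x K : ℝ) (hK : 0 ≤ K) (hx : -c ≤ x) :
    ∫⁻ s in Set.Ioo (-c) x, ENNReal.ofReal (K * (s + c) ^ (-3 / 4 : ℝ))
      ≤ ENNReal.ofReal (K * (4 * (x + c) ^ (1 / 4 : ℝ))) := by
  have hi : IntervalIntegrable (fun s : ℝ => (s + c) ^ (-3 / 4 : ℝ)) volume (-c) x := by
    have := (intervalIntegral.intervalIntegrable_rpow' (a := 0) (b := x + c) (r := -3 / 4)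
      (by norm_num)).comp_add_right c
    simpa using this
  have hval : ∫ s in (-c)..x, K * (s + c) ^ (-3 / 4 : ℝ) = K * (4 * (x + c) ^ (1 / 4 : ℝ)) := by
    rw [intervalIntegral.integral_const_mul,
      intervalIntegral.integral_comp_add_right (fun s : ℝ => s ^ (-3 / 4 : ℝ)),
      integral_rpow (Or.inl (by norm_num))]
    norm_num
    left
    ring
  have hi2 := (hi.const_mul K)
  rw [intervalIntegrable_iff_integrableOn_Ioc_of_le hx] at hi2
  rw [← hval, intervalIntegral.integral_of_le hx, ofReal_integral_eq_lintegral_ofReal hi2]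
  · exact lintegral_mono_set Set.Ioo_subset_Ioc_self
  · rw [Filter.EventuallyLE, ae_restrict_iff' measurableSet_Ioc]
    filter_upwards with s hs
    have : 0 ≤ s + c := by linarith [hs.1]
    simp only [Pi.zero_apply]
    positivity

lemma bely_pt (a c : ℝ) (ha : 0 < a) (hc : 0 < c) :
    1 / (a + c) ^ 2 * (Real.pi * c) ≤ Real.pi * (a ^ (-1 / 4 : ℝ) * c ^ (-3 / 4 : ℝ)) := by
  have hpi := Real.pi_pos
  have h1 : 1 / (a + c) ^ 2 * (Real.pi * c) ≤ Real.pi * (a + c)⁻¹ := by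
    rw [div_mul_eq_mul_div, div_le_iff₀ (by positivity)]
    have : Real.pi * (a + c)⁻¹ * (a + c) ^ 2 = Real.pi * (a + c) := by
      field_simp
    rw [this]
    nlinarith
  have h2 : (a + c)⁻¹ = (a + c) ^ (-1 / 4 : ℝ) * (a + c) ^ (-3 / 4 : ℝ) := by
    rw [← Real.rpow_add (by positivity)]
    norm_num
    rw [Real.rpow_neg_one]
  have h3 : (a + c) ^ (-1 / 4 : ℝ) ≤ a ^ (-1 / 4 : ℝ) :=
    Real.rpow_le_rpow_of_nonpos ha (by linarith) (by norm_num)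
  have h4 : (a + c) ^ (-3 / 4 : ℝ) ≤ c ^ (-3 / 4 : ℝ) :=
    Real.rpow_le_rpow_of_nonpos hc (by linarith) (by norm_num)
  refine h1.trans ?_
  rw [h2]
  gcongr

lemma belyJ_near (x a d : ℝ) (p : E3) (hx : 0 < x) (hd : 0 < d) (hda : d ≤ a) (hp : ‖p‖ < 6) :
    belyJ x a p ≤ ENNReal.ofReal (4 * Real.pi * (x + 3)) *
      (ENNReal.ofReal (‖p‖ ^ (-3 / 2 : ℝ)) + ENNReal.ofReal (d ^ (-1 / 2 : ℝ))) := by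
  have ha : 0 < a := hd.trans_le hda
  have hpi := Real.pi_pos
  rcases eq_or_ne p 0 with rfl | hp0
  · have : belyJ x a 0 = 0 := by
      unfold belyJ
      have : {r' : E3 | ‖r'‖ < x ∧ x < ‖r' - 0‖} = ∅ := by
        ext r
        simp only [sub_zero, Set.mem_ofPred_eq, Set.mem_empty_iff_false, iff_false]
        rintro ⟨h1, h2⟩
        linarith
      rw [this]; simp
    rw [this]; exact zero_le
  have hP : 0 < ‖p‖ := norm_pos_iff.2 hp0
  refine (belyJ_slice x a p).trans ?_
  set P := ‖p‖
  have hK : 0 ≤ Real.pi * (a ^ (-1 / 4 : ℝ) * (2 * P) ^ (-3 / 4 : ℝ)) := by positivity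
  calc _ ≤ ∫⁻ s in Set.Ioo (-(P / 2)) x, ENNReal.ofReal
        (Real.pi * (a ^ (-1 / 4 : ℝ) * (2 * P) ^ (-3 / 4 : ℝ)) * (s + P / 2) ^ (-3 / 4 : ℝ)) := by
        rw [neg_div]
        apply setLIntegral_mono' measurableSet_Ioo
        intro s hs
        have hs' : 0 < s + P / 2 := by linarith [hs.1]
        rw [← ENNReal.ofReal_mul (by positivity)]
        apply ENNReal.ofReal_le_ofReal
        refine (bely_pt a (2 * P * (s + P / 2)) ha (by positivity)).trans (le_of_eq ?_)
        rw [Real.mul_rpow (by positivity) hs'.le]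
        ring
    _ ≤ _ := bely_int (P / 2) x _ hK (by linarith)
    _ ≤ ENNReal.ofReal (4 * Real.pi * (x + 3) * (P ^ (-3 / 2 : ℝ) + d ^ (-1 / 2 : ℝ))) := by
        apply ENNReal.ofReal_le_ofReal
        have h1 : (x + P / 2) ^ (1 / 4 : ℝ) ≤ x + 3 := by
          calc (x + P / 2) ^ (1 / 4 : ℝ) ≤ (x + 3) ^ (1 / 4 : ℝ) := by
                apply Real.rpow_le_rpow (by positivity) (by linarith) (by norm_num)
            _ ≤ (x + 3) ^ (1 : ℝ) :=
                Real.rpow_le_rpow_of_exponent_le (by linarith) (by norm_num)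
            _ = x + 3 := Real.rpow_one _
        have h2 : (2 * P) ^ (-3 / 4 : ℝ) ≤ P ^ (-3 / 4 : ℝ) :=
          Real.rpow_le_rpow_of_nonpos hP (by linarith) (by norm_num)
        have h3 : a ^ (-1 / 4 : ℝ) ≤ d ^ (-1 / 4 : ℝ) :=
          Real.rpow_le_rpow_of_nonpos hd hda (by norm_num)
        have e1 : P ^ (-3 / 2 : ℝ) = P ^ (-3 / 4 : ℝ) * P ^ (-3 / 4 : ℝ) := by
          rw [← Real.rpow_add hP]; norm_num
        have e2 : d ^ (-1 / 2 : ℝ) = d ^ (-1 / 4 : ℝ) * d ^ (-1 / 4 : ℝ) := by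
          rw [← Real.rpow_add hd]; norm_num
        have h4 : d ^ (-1 / 4 : ℝ) * P ^ (-3 / 4 : ℝ) ≤ P ^ (-3 / 2 : ℝ) + d ^ (-1 / 2 : ℝ) := by
          rw [e1, e2]
          have u0 : 0 ≤ P ^ (-3 / 4 : ℝ) := by positivity
          have v0 : 0 ≤ d ^ (-1 / 4 : ℝ) := by positivity
          nlinarith [sq_nonneg (P ^ (-3 / 4 : ℝ) - d ^ (-1 / 4 : ℝ)), mul_nonneg u0 v0]
        calc _ ≤ Real.pi * (d ^ (-1 / 4 : ℝ) * P ^ (-3 / 4 : ℝ)) * (4 * (x + 3)) := by gcongr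
          _ ≤ Real.pi * (P ^ (-3 / 2 : ℝ) + d ^ (-1 / 2 : ℝ)) * (4 * (x + 3)) := by gcongr
          _ = _ := by ring
    _ = _ := by
        rw [ENNReal.ofReal_mul (by positivity), ENNReal.ofReal_add (by positivity) (by positivity)]

/-! ### Finiteness of the outer integrals -/

lemma bely_K : ∫⁻ p in Metric.ball (0 : E3) 6, ENNReal.ofReal (‖p‖ ^ (-3 / 2 : ℝ)) < ∞ := by
  have : IntegrableOn (fun p : E3 => (fun y : ℝ => y ^ (-3 / 2 : ℝ)) ‖p‖) (Metric.ball 0 6) := by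
    refine (integrableOn_fun_norm_addHaar volume (f := fun y : ℝ => y ^ (-3 / 2 : ℝ))).2 ?_
    have h : IntegrableOn (fun y : ℝ => y ^ (1 / 2 : ℝ)) (Set.Ioo 0 6) := by
      rw [intervalIntegral.integrableOn_Ioo_rpow_iff (by norm_num)]; norm_num
    refine h.congr_fun ?_ measurableSet_Ioo
    intro y hy
    simp only [finrank_euclideanSpace, Fintype.card_fin, smul_eq_mul]
    norm_num
    rw [← Real.rpow_natCast, ← Real.rpow_add hy.1]
    norm_num
  exact this.lintegral_lt_top

lemma bely_M : ∫⁻ p in Metric.ball (0 : E3) 7, ENNReal.ofReal (|‖p‖ - 1| ^ (-1 / 2 : ℝ)) < ∞ := by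
  have : IntegrableOn (fun p : E3 => (fun y : ℝ => |y - 1| ^ (-1 / 2 : ℝ)) ‖p‖)
      (Metric.ball 0 7) := by
    refine (integrableOn_fun_norm_addHaar volume
      (f := fun y : ℝ => |y - 1| ^ (-1 / 2 : ℝ))).2 ?_
    have h0 : ∀ b : ℝ, 0 ≤ b →
        IntervalIntegrable (fun y : ℝ => |y| ^ (-1 / 2 : ℝ)) volume 0 b := by
      intro b hb
      refine (intervalIntegral.intervalIntegrable_rpow' (r := -1 / 2) (by norm_num)).congr ?_
      intro y hy
      rw [Set.uIoc_of_le hb] at hy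
      simp only
      rw [abs_of_pos hy.1]
    have h1 : IntervalIntegrable (fun y : ℝ => |y| ^ (-1 / 2 : ℝ)) volume (-1) 6 := by
      refine IntervalIntegrable.trans (b := 0) ?_ (h0 6 (by norm_num))
      have := (h0 1 (by norm_num)).comp_mul_left (c := -1)
      simpa using this.symm
    have h2 := h1.comp_sub_right 1
    have h3 := h2.continuousOn_mul (g := fun y : ℝ => y ^ 2) (by fun_prop)
    norm_num at h3
    rw [intervalIntegrable_iff_integrableOn_Ioo_of_le (by norm_num)] at h3
    refine h3.congr_fun ?_ measurableSet_Ioo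
    intro y hy
    simp
    norm_num
  exact this.lintegral_lt_top

lemma bely_N : ∫⁻ p : E3, ENNReal.ofReal ((1 + ‖p‖) ^ (-4 : ℝ)) < ∞ :=
  finite_integral_one_add_norm (by simp; norm_num)

noncomputable def belyKf : E3 → ℝ≥0∞ :=
  (Metric.ball (0 : E3) 6).indicator (fun p => ENNReal.ofReal (‖p‖ ^ (-3 / 2 : ℝ)))

noncomputable def belyMf : E3 → ℝ≥0∞ :=
  (Metric.ball (0 : E3) 7).indicator (fun p => ENNReal.ofReal (|‖p‖ - 1| ^ (-1 / 2 : ℝ)))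

noncomputable def belyNf : E3 → ℝ≥0∞ := fun p => ENNReal.ofReal ((1 + ‖p‖) ^ (-4 : ℝ))

lemma belyKf_meas : Measurable belyKf :=
  Measurable.indicator (by fun_prop) measurableSet_ball

lemma belyMf_meas : Measurable belyMf :=
  Measurable.indicator (by fun_prop) measurableSet_ball

lemma belyKf_lt : ∫⁻ p, belyKf p < ∞ := by
  unfold belyKf
  rw [lintegral_indicator measurableSet_ball]
  exact bely_K

lemma belyMf_lt : ∫⁻ p, belyMf p < ∞ := by
  unfold belyMf
  rw [lintegral_indicator measurableSet_ball]
  exact bely_M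

/-- Bound in terms of `Kf`, `Mf`. -/
lemma belyJ_near' (x a : ℝ) (p k : E3) (hx : 0 < x) (hd : ‖k‖ ≠ 1) (hda : |‖k‖ - 1| ≤ a)
    (hp : ‖p‖ < 6) (hk : ‖k‖ < 7) :
    belyJ x a p ≤ ENNReal.ofReal (4 * Real.pi * (x + 3)) * (belyKf p + belyMf k) := by
  have h1 : belyKf p = ENNReal.ofReal (‖p‖ ^ (-3 / 2 : ℝ)) :=
    Set.indicator_of_mem (by simpa using hp) _
  have h2 : belyMf k = ENNReal.ofReal (|‖k‖ - 1| ^ (-1 / 2 : ℝ)) :=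
    Set.indicator_of_mem (by simpa using hk) _
  rw [h1, h2]
  exact belyJ_near x a _ p hx (abs_pos.2 (sub_ne_zero.2 hd)) hda hp

lemma bely_case1 (x : ℝ) (q : E3) (hx : 0 < x) (hq : ‖q‖ < 1) :
    belyakovI2q x q ≤ ENNReal.ofReal (4 * Real.pi * (x + 3)) *
      ((∫⁻ p, belyKf p) + ∫⁻ p, belyMf p) +
      ENNReal.ofReal (64 * (x ^ 3 * (Real.pi * 4 / 3))) * ∫⁻ p, belyNf p := by
  have hpi := Real.pi_pos
  calc belyakovI2q x q ≤ ∫⁻ p, (ENNReal.ofReal (4 * Real.pi * (x + 3)) *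
        (belyKf p + belyMf (q + p)) +
        ENNReal.ofReal (64 * (x ^ 3 * (Real.pi * 4 / 3))) * belyNf p) := by
        unfold belyakovI2q
        apply lintegral_mono
        intro p
        have hz : {p : E3 | ‖q - p‖ < 1 ∧ 1 < ‖q‖}.indicator
          (fun p => ∫⁻ r' in {r' : E3 | ‖r'‖ < x ∧ x < ‖r' - p‖},
          ENNReal.ofReal (1 / (‖q‖ ^ 2 - ‖q - p‖ ^ 2 + ‖r' - p‖ ^ 2 - ‖r'‖ ^ 2) ^ 2)) p = 0 := by
          apply Set.indicator_of_notMem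
          rintro ⟨-, h⟩
          linarith
        simp only
        rw [hz, add_zero]
        rw [Set.indicator_apply]
        split_ifs with hmem
        swap
        · exact zero_le
        obtain ⟨-, hmem⟩ := hmem
        change belyJ x (‖q + p‖ ^ 2 - ‖q‖ ^ 2) p ≤ _
        have hqn := norm_nonneg q
        rcases lt_or_ge ‖p‖ 6 with hp | hp
        · refine le_trans ?_ le_self_add
          apply belyJ_near' _ _ _ _ hx hmem.ne' _ hp
          · linarith [norm_add_le q p]
          · rw [abs_of_pos (by linarith)]
            nlinarith
        · refine le_trans ?_ le_add_self
          have hqp : ‖p‖ - 1 ≤ ‖q + p‖ := by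
            have := norm_sub_le (q + p) q
            rw [add_sub_cancel_left] at this
            linarith
          refine (belyJ_far x _ (‖p‖ ^ 2 / 2) p hx (by positivity) (by nlinarith)).trans ?_
          unfold belyNf
          rw [← ENNReal.ofReal_mul (by positivity)]
          apply ENNReal.ofReal_le_ofReal
          have e : (1 + ‖p‖) ^ (-4 : ℝ) = 1 / (1 + ‖p‖) ^ 4 := by
            rw [Real.rpow_neg (by positivity), one_div]
            norm_cast
          have h : 1 / (‖p‖ ^ 2 / 2) ^ 2 ≤ 64 * (1 / (1 + ‖p‖) ^ 4) := by
            rw [mul_one_div, div_le_div_iff₀ (by positivity) (by positivity)]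
            have : (1 + ‖p‖) ^ 4 ≤ (2 * ‖p‖) ^ 4 := by gcongr; linarith
            nlinarith
          rw [e]
          calc _ ≤ 64 * (1 / (1 + ‖p‖) ^ 4) * (x ^ 3 * (Real.pi * 4 / 3)) := by gcongr
            _ = _ := by ring
    _ = _ := by
        have m2 : Measurable fun p => belyMf (q + p) := belyMf_meas.comp (by fun_prop)
        have m1 := belyKf_meas
        have mN : Measurable belyNf := by unfold belyNf; fun_prop
        rw [lintegral_add_left (by fun_prop), lintegral_const_mul _ (by fun_prop),
          lintegral_const_mul _ mN, lintegral_add_left m1, lintegral_add_left_eq_self]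

lemma bely_zero1 (x : ℝ) (q p : E3) (hq : 1 ≤ ‖q‖) : {p : E3 | ‖q‖ < 1 ∧ 1 < ‖q + p‖}.indicator
      (fun p => ∫⁻ r' in {r' : E3 | ‖r'‖ < x ∧ x < ‖r' - p‖},
        ENNReal.ofReal (1 / (‖q + p‖ ^ 2 - ‖q‖ ^ 2 + ‖r' - p‖ ^ 2 - ‖r'‖ ^ 2) ^ 2)) p = 0 := by
  apply Set.indicator_of_notMem
  rintro ⟨h, -⟩
  linarith

lemma bely_case2 (x : ℝ) (q : E3) (hx : 0 < x) (hq : 1 ≤ ‖q‖) (hq4 : ‖q‖ ≤ 4) :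
    belyakovI2q x q ≤ ENNReal.ofReal (4 * Real.pi * (x + 3)) *
      ((∫⁻ p, belyKf p) + ∫⁻ p, belyMf p) := by
  calc belyakovI2q x q ≤ ∫⁻ p, (ENNReal.ofReal (4 * Real.pi * (x + 3)) *
        (belyKf p + belyMf (q - p))) := by
        unfold belyakovI2q
        apply lintegral_mono
        intro p
        simp only
        rw [bely_zero1 x q p hq, zero_add]
        rw [Set.indicator_apply]
        split_ifs with hmem
        swap
        · exact zero_le
        obtain ⟨hmem, -⟩ := hmem
        change belyJ x (‖q‖ ^ 2 - ‖q - p‖ ^ 2) p ≤ _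
        have hqn := norm_nonneg (q - p)
        apply belyJ_near' _ _ _ _ hx hmem.ne
        · rw [abs_of_neg (by linarith)]
          nlinarith
        · have := norm_sub_le q (q - p)
          rw [sub_sub_cancel] at this
          linarith
        · linarith
    _ = _ := by
        have m2 : Measurable fun p => belyMf (q - p) := belyMf_meas.comp (by fun_prop)
        have m1 := belyKf_meas
        rw [lintegral_const_mul _ (by fun_prop), lintegral_add_left m1,
          lintegral_sub_left_eq_self belyMf q]

lemma bely_case3 (x : ℝ) (q : E3) (hx : 0 < x) (hq4 : 4 < ‖q‖) :
    belyakovI2q x q ≤ ENNReal.ofReal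
      (1 / (‖q‖ ^ 2 / 2) ^ 2 * (x ^ 3 * (Real.pi * 4 / 3)) * (Real.pi * 4 / 3)) := by
  have hpi := Real.pi_pos
  calc belyakovI2q x q ≤ ∫⁻ p, (Metric.ball q 1).indicator (fun _ => ENNReal.ofReal
        (1 / (‖q‖ ^ 2 / 2) ^ 2 * (x ^ 3 * (Real.pi * 4 / 3)))) p := by
        unfold belyakovI2q
        apply lintegral_mono
        intro p
        simp only
        rw [bely_zero1 x q p (by linarith), zero_add]
        rw [Set.indicator_apply]
        split_ifs with hmem
        swap
        · exact zero_le
        obtain ⟨hmem, -⟩ := hmem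
        change belyJ x (‖q‖ ^ 2 - ‖q - p‖ ^ 2) p ≤ _
        rw [Set.indicator_of_mem (by rwa [Metric.mem_ball, dist_comm, dist_eq_norm])]
        apply belyJ_far x _ _ p hx (by positivity)
        have hqn := norm_nonneg (q - p)
        nlinarith
    _ = _ := by
        rw [lintegral_indicator measurableSet_ball, setLIntegral_const,
          EuclideanSpace.volume_ball_fin_three, ← ENNReal.ofReal_pow zero_le_one,
          ← ENNReal.ofReal_mul (by norm_num), ← ENNReal.ofReal_mul (by positivity)]
        congr 1
        ring

/-- Upper bound `I₂^{(q)}(x) ≤ C (x⁻² + x³)/(1 + |q|⁴)` for all `x > 0` and `q ∈ ℝ³`. -/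
theorem belyakovI2q_upper_bound :
    ∃ C : ℝ, 0 < C ∧ ∀ (x : ℝ) (q : E3), 0 < x →
      belyakovI2q x q ≤ ENNReal.ofReal (C * (x ^ (-2 : ℤ) + x ^ 3) / (1 + ‖q‖ ^ 4)) := by
  have hpi := Real.pi_pos
  set Z : ℝ≥0∞ := ENNReal.ofReal (16 * Real.pi) * ((∫⁻ p, belyKf p) + ∫⁻ p, belyMf p) +
    ENNReal.ofReal (64 * (Real.pi * 4 / 3)) * ∫⁻ p, belyNf p with hZ
  have hZt : Z ≠ ∞ := by
    rw [hZ]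
    exact ENNReal.add_ne_top.2 ⟨ENNReal.mul_ne_top ENNReal.ofReal_ne_top
      (ENNReal.add_ne_top.2 ⟨belyKf_lt.ne, belyMf_lt.ne⟩),
      ENNReal.mul_ne_top ENNReal.ofReal_ne_top bely_N.ne⟩
  have hZ0 : 0 ≤ Z.toReal := ENNReal.toReal_nonneg
  refine ⟨257 * (Z.toReal + (Real.pi * 4 / 3) ^ 2), by positivity, ?_⟩
  intro x q hx
  set W : ℝ := x ^ (-2 : ℤ) + x ^ 3 with hW
  have hx2 : 0 < x ^ (-2 : ℤ) := by positivity
  have hWpos : 0 < W := by positivity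
  have hW3 : x ^ 3 ≤ W := by linarith
  have hW1 : x + 3 ≤ 4 * W := by
    rcases le_or_gt x 1 with h | h
    · have : 1 ≤ x ^ (-2 : ℤ) := by
        rw [zpow_neg]
        apply (one_le_inv₀ (by positivity)).2
        norm_cast
        exact pow_le_one₀ hx.le h
      have := pow_pos hx 3
      linarith
    · nlinarith [sq_nonneg x, mul_pos hx hx, mul_self_nonneg (x - 1)]
  rcases le_or_gt ‖q‖ 4 with hq | hq
  · have key : belyakovI2q x q ≤ ENNReal.ofReal W * Z := by
      have hT : ENNReal.ofReal (4 * Real.pi * (x + 3)) *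
          ((∫⁻ p, belyKf p) + ∫⁻ p, belyMf p) +
          ENNReal.ofReal (64 * (x ^ 3 * (Real.pi * 4 / 3))) * ∫⁻ p, belyNf p
          ≤ ENNReal.ofReal W * Z := by
        rw [hZ, mul_add (ENNReal.ofReal W), ← mul_assoc (ENNReal.ofReal W),
          ← mul_assoc (ENNReal.ofReal W), ← ENNReal.ofReal_mul hWpos.le,
          ← ENNReal.ofReal_mul hWpos.le]
        refine add_le_add (mul_le_mul_left (ENNReal.ofReal_le_ofReal ?_) _)
          (mul_le_mul_left (ENNReal.ofReal_le_ofReal ?_) _)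
        · nlinarith
        · have := mul_le_mul_of_nonneg_right hW3 hpi.le
          nlinarith
      rcases lt_or_ge ‖q‖ 1 with h1 | h1
      · exact (bely_case1 x q hx h1).trans hT
      · exact (bely_case2 x q hx h1 hq).trans (le_self_add.trans hT)
    refine key.trans ?_
    rw [← ENNReal.ofReal_toReal hZt, ← ENNReal.ofReal_mul hWpos.le, ENNReal.toReal_ofReal hZ0]
    apply ENNReal.ofReal_le_ofReal
    rw [le_div_iff₀ (by positivity)]
    have : 1 + ‖q‖ ^ 4 ≤ 257 := by
      have : ‖q‖ ^ 4 ≤ 4 ^ 4 := by gcongr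
      linarith
    calc W * Z.toReal * (1 + ‖q‖ ^ 4) ≤ W * (Z.toReal + (Real.pi * 4 / 3) ^ 2) * 257 := by
          gcongr
          nlinarith [sq_nonneg (Real.pi * 4 / 3)]
      _ = _ := by ring
  · refine (bely_case3 x q hx hq).trans ?_
    apply ENNReal.ofReal_le_ofReal
    have hq4 : (1 : ℝ) ≤ ‖q‖ ^ 4 := one_le_pow₀ (by linarith)
    have h1 : 1 / (‖q‖ ^ 2 / 2) ^ 2 ≤ 257 / (1 + ‖q‖ ^ 4) := by
      rw [div_le_div_iff₀ (by positivity) (by positivity)]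
      nlinarith
    calc _ ≤ 257 / (1 + ‖q‖ ^ 4) * (W * (Real.pi * 4 / 3)) * (Real.pi * 4 / 3) := by gcongr
      _ = 257 / (1 + ‖q‖ ^ 4) * W * (0 + (Real.pi * 4 / 3) ^ 2) := by ring
      _ ≤ 257 / (1 + ‖q‖ ^ 4) * W * (Z.toReal + (Real.pi * 4 / 3) ^ 2) := by gcongr
      _ = _ := by ring
end

section
/- There exists a constant c > 0, independent of x and q, such that for every x ∈ (0,∞) and every q ∈ ℝ³ with |q| ≥ 3 one has I₂^{(q)}(x) ≥ c x³/(x⁴ + |q|⁴). -/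
open MeasureTheory
open scoped ENNReal

lemma shell_vol (x s : ℝ) (hs : 0 ≤ s) (hsx : s ≤ x) :
    ENNReal.ofReal (x ^ 3 - s ^ 3) ≤ volume (Metric.ball (0 : E3) x \ Metric.closedBall 0 s) := by
  refine le_trans ?_ le_measure_sdiff
  rw [EuclideanSpace.volume_ball_fin_three, EuclideanSpace.volume_closedBall_fin_three]
  have hx : 0 ≤ x := hs.trans hsx
  rw [← ENNReal.ofReal_pow hx, ← ENNReal.ofReal_pow hs,
    ← ENNReal.ofReal_mul (by positivity), ← ENNReal.ofReal_mul (by positivity),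
    ← ENNReal.ofReal_sub _ (by positivity)]
  apply ENNReal.ofReal_le_ofReal
  have h3 : s ^ 3 ≤ x ^ 3 := by gcongr
  have hpi := Real.pi_gt_three
  nlinarith

lemma half_vol (x s : ℝ) (p : E3) (hs : 0 ≤ s) (hsx : s ≤ x) :
    ENNReal.ofReal ((x ^ 3 - s ^ 3) / 2) ≤
      volume ((Metric.ball (0 : E3) x \ Metric.closedBall 0 s) ∩ {r | inner ℝ r p ≤ 0}) := by
  set T := (Metric.ball (0 : E3) x \ Metric.closedBall 0 s) ∩ {r | inner ℝ r p ≤ 0} with hT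
  have h1 := shell_vol x s hs hsx
  have hsub : Metric.ball (0 : E3) x \ Metric.closedBall 0 s ⊆ T ∪ Neg.neg ⁻¹' T := by
    intro r hr
    by_cases h : inner ℝ r p ≤ 0
    · exact Or.inl ⟨hr, h⟩
    · right
      refine ⟨?_, ?_⟩
      · simpa using hr
      · simp only [Set.mem_setOf_eq, inner_neg_left]
        linarith
  have h2 : volume (Neg.neg ⁻¹' T) = volume T := Measure.measure_preimage_neg volume T
  have h3 := h1.trans ((measure_mono hsub).trans (measure_union_le _ _))
  rw [h2, ← two_mul] at h3
  rw [ENNReal.ofReal_div_of_pos (by norm_num)]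
  apply ENNReal.div_le_of_le_mul
  rw [mul_comm]
  simpa using h3

lemma final_ineq (x Q m : ℝ) (hx : 0 < x) (hQ : 3 ≤ Q) (hm : m = min x (2 * Q / 3)) :
    1 / 162 * x ^ 3 / (x ^ 4 + Q ^ 4) ≤ 1 / (3 * Q * (Q + x)) ^ 2 * (x * m ^ 2 / 2) := by
  have hQ0 : 0 < Q := by linarith
  rw [one_div_mul_eq_div ((3 * Q * (Q + x)) ^ 2), div_le_div_iff₀ (by positivity) (by positivity)]
  rcases le_total x Q with h | h
  · have hm1 : 2 * x / 3 ≤ m := by rw [hm]; apply le_min <;> linarith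
    have hm2 : (2 * x / 3) ^ 2 ≤ m ^ 2 := by gcongr
    calc 1 / 162 * x ^ 3 * (3 * Q * (Q + x)) ^ 2
        ≤ 1 / 162 * x ^ 3 * (3 * Q * (Q + Q)) ^ 2 := by gcongr
      _ = x * (2 * x / 3) ^ 2 / 2 * (0 + Q ^ 4) := by ring
      _ ≤ x * m ^ 2 / 2 * (x ^ 4 + Q ^ 4) := by gcongr; positivity
  · have hm1 : 2 * Q / 3 ≤ m := by rw [hm]; apply le_min <;> linarith
    have hm2 : (2 * Q / 3) ^ 2 ≤ m ^ 2 := by gcongr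
    calc 1 / 162 * x ^ 3 * (3 * Q * (Q + x)) ^ 2
        ≤ 1 / 162 * x ^ 3 * (3 * Q * (x + x)) ^ 2 := by gcongr
      _ = x * (2 * Q / 3) ^ 2 / 2 * (x ^ 4 + 0) := by ring
      _ ≤ x * m ^ 2 / 2 * (x ^ 4 + Q ^ 4) := by gcongr; positivity

lemma inner_bound (x : ℝ) (q p : E3) (hx : 0 < x) (hq : 3 ≤ ‖q‖) (hp : ‖q - p‖ < 1) :
    ENNReal.ofReal (1 / 162 * x ^ 3 / (x ^ 4 + ‖q‖ ^ 4)) ≤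
      ∫⁻ r' in {r' : E3 | ‖r'‖ < x ∧ x < ‖r' - p‖},
        ENNReal.ofReal (1 / (‖q‖ ^ 2 - ‖q - p‖ ^ 2 + ‖r' - p‖ ^ 2 - ‖r'‖ ^ 2) ^ 2) := by
  obtain ⟨m, hm⟩ : ∃ m, m = min x (2 * ‖q‖ / 3) := ⟨_, rfl⟩
  have hm0 : 0 < m := by rw [hm]; apply lt_min <;> linarith
  have hmx : m ≤ x := hm ▸ min_le_left _ _
  have hmq : m ≤ 2 * ‖q‖ / 3 := hm ▸ min_le_right _ _
  have hpl : 2 * ‖q‖ / 3 ≤ ‖p‖ := by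
    have := norm_sub_norm_le q p
    linarith
  have hpu : ‖p‖ ≤ 4 * ‖q‖ / 3 := by
    have := norm_sub_norm_le p q
    rw [norm_sub_rev] at this
    linarith
  set s := Real.sqrt (x ^ 2 - m ^ 2) with hs
  have hs0 : 0 ≤ s := Real.sqrt_nonneg _
  have hs2 : s ^ 2 = x ^ 2 - m ^ 2 := Real.sq_sqrt (by nlinarith)
  have hsx : s ≤ x := by nlinarith [sq_nonneg m]
  set T := (Metric.ball (0 : E3) x \ Metric.closedBall 0 s) ∩ {r | inner ℝ r p ≤ 0} with hT
  have hTm : MeasurableSet T := by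
    refine (measurableSet_ball.diff measurableSet_closedBall).inter ?_
    exact measurableSet_le (by fun_prop) (by fun_prop)
  have key : ∀ r ∈ T, (‖r‖ < x ∧ x < ‖r - p‖) ∧
      1 / (3 * ‖q‖ * (‖q‖ + x)) ^ 2 ≤
        1 / (‖q‖ ^ 2 - ‖q - p‖ ^ 2 + ‖r - p‖ ^ 2 - ‖r‖ ^ 2) ^ 2 := by
    rintro r ⟨⟨h1, h2⟩, h3⟩
    simp only [Metric.mem_ball, Metric.mem_closedBall, dist_zero_right, not_le,
      Set.mem_setOf_eq] at h1 h2 h3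
    have h4 := norm_sub_sq_real r p
    have h5 : s ^ 2 < ‖r‖ ^ 2 := by gcongr
    have h6 : m ^ 2 ≤ ‖p‖ ^ 2 := by gcongr; linarith
    have h7 : x < ‖r - p‖ := by
      apply lt_of_pow_lt_pow_left₀ 2 (norm_nonneg _)
      linarith
    refine ⟨⟨h1, h7⟩, ?_⟩
    have h8 : ‖r‖ ^ 2 < ‖r - p‖ ^ 2 := by gcongr; linarith
    have h9 : ‖q - p‖ ^ 2 < ‖q‖ ^ 2 := by gcongr; linarith
    have h10 : -inner ℝ r p ≤ x * (4 * ‖q‖ / 3) := by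
      have := abs_real_inner_le_norm r p
      have h11 := neg_abs_le (inner ℝ r p)
      have : ‖r‖ * ‖p‖ ≤ x * (4 * ‖q‖ / 3) := by gcongr
      linarith
    have h12 : ‖p‖ ^ 2 ≤ (4 * ‖q‖ / 3) ^ 2 := by gcongr
    apply one_div_le_one_div_of_le
    · have : 0 < ‖q‖ ^ 2 - ‖q - p‖ ^ 2 + ‖r - p‖ ^ 2 - ‖r‖ ^ 2 := by linarith
      positivity
    · apply pow_le_pow_left₀ (by linarith)
      nlinarith [sq_nonneg ‖q - p‖, mul_pos hx (by linarith : 0 < ‖q‖)]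
  calc ENNReal.ofReal (1 / 162 * x ^ 3 / (x ^ 4 + ‖q‖ ^ 4))
      ≤ ENNReal.ofReal (1 / (3 * ‖q‖ * (‖q‖ + x)) ^ 2 * ((x ^ 3 - s ^ 3) / 2)) := by
        apply ENNReal.ofReal_le_ofReal
        refine (final_ineq x ‖q‖ m hx hq hm).trans ?_
        gcongr
        have : s ^ 3 ≤ x * s ^ 2 := by
          rw [pow_succ' s 2]; gcongr
        rw [hs2] at this
        linarith
    _ = ENNReal.ofReal (1 / (3 * ‖q‖ * (‖q‖ + x)) ^ 2) * ENNReal.ofReal ((x ^ 3 - s ^ 3) / 2) :=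
        ENNReal.ofReal_mul (by positivity)
    _ ≤ ENNReal.ofReal (1 / (3 * ‖q‖ * (‖q‖ + x)) ^ 2) * volume T := by
        gcongr
        exact half_vol x s p hs0 hsx
    _ = ∫⁻ r' in T, ENNReal.ofReal (1 / (3 * ‖q‖ * (‖q‖ + x)) ^ 2) :=
        (setLIntegral_const _ _).symm
    _ ≤ ∫⁻ r' in T, ENNReal.ofReal (1 / (‖q‖ ^ 2 - ‖q - p‖ ^ 2 + ‖r' - p‖ ^ 2 - ‖r'‖ ^ 2) ^ 2) :=
        setLIntegral_mono' hTm fun r hr => ENNReal.ofReal_le_ofReal (key r hr).2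
    _ ≤ _ := lintegral_mono_set fun r hr => (key r hr).1

/-- Lower bound `I₂^{(q)}(x) ≥ c x³/(x⁴ + |q|⁴)` for `|q| ≥ 3` and all `x > 0`. -/
theorem belyakovI2q_lower_bound_large_q :
    ∃ c : ℝ, 0 < c ∧ ∀ (x : ℝ) (q : E3), 0 < x → 3 ≤ ‖q‖ →
      ENNReal.ofReal (c * x ^ 3 / (x ^ 4 + ‖q‖ ^ 4)) ≤ belyakovI2q x q := by
  refine ⟨1 / 162, by norm_num, fun x q hx hq => ?_⟩
  set K := ENNReal.ofReal (1 / 162 * x ^ 3 / (x ^ 4 + ‖q‖ ^ 4)) with hK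
  have hvol : (1 : ℝ≥0∞) ≤ volume (Metric.ball q 1) := by
    rw [EuclideanSpace.volume_ball_fin_three]
    have hpi := Real.pi_gt_three
    simp only [ENNReal.ofReal_one, one_pow, one_mul, ENNReal.one_le_ofReal]
    linarith
  calc K = K * 1 := (mul_one _).symm
    _ ≤ K * volume (Metric.ball q 1) := by gcongr
    _ = ∫⁻ p, (Metric.ball q 1).indicator (fun _ => K) p :=
        (lintegral_indicator_const measurableSet_ball _).symm
    _ ≤ belyakovI2q x q := by
        apply lintegral_mono
        intro p
        refine le_trans ?_ le_add_self
        by_cases hp : ‖q - p‖ < 1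
        · have h1 : p ∈ Metric.ball q 1 := by
            rw [Metric.mem_ball, dist_eq_norm, norm_sub_rev]; exact hp
          have h2 : p ∈ {p : E3 | ‖q - p‖ < 1 ∧ 1 < ‖q‖} := ⟨hp, by linarith⟩
          rw [Set.indicator_of_mem h1, Set.indicator_of_mem h2]
          exact inner_bound x q p hx hq hp
        · have h1 : p ∉ Metric.ball q 1 := by
            rw [Metric.mem_ball, dist_eq_norm, norm_sub_rev]; exact hp
          rw [Set.indicator_of_notMem h1]
          exact zero_le
end

section
/- Let a > 0 and k, k' > 0, and let G : ℝ³ → [0,∞) be a bounded measurable function. Define n^{Bel}(G) := (a²/π⁴) ∫_{ℝ³} dp ∫_{|r|<k<|r+p|} dr ∫_{|r'|<k'<|r'−p|} dr' (G(r+p) + G(−r)) · (|r+p|² − |r|² + |r'−p|² − |r'|²)^{−2}. Then there exist constants c, C > 0, depending only on the ratio k'/k, such that c a² k⁵ ∫_{ℝ³} G(k p)/(1 + |p|⁴) dp ≤ n^{Bel}(G) ≤ C a² k⁵ ∫_{ℝ³} G(k p)/(1 + |p|⁴) dp. -/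
open MeasureTheory Real
open scoped ENNReal

lemma rpow_anti {x y : ℝ≥0∞} (h : x ≤ y) {g : ℝ} (hg : 0 ≤ g) : y ^ (-g) ≤ x ^ (-g) := by
  rw [ENNReal.rpow_neg, ENNReal.rpow_neg]
  exact ENNReal.inv_le_inv.2 (ENNReal.rpow_le_rpow h hg)

lemma scale_lintegral {E : Type*} [NormedAddCommGroup E] [NormedSpace ℝ E] [MeasurableSpace E]
    [BorelSpace E] [FiniteDimensional ℝ E] (μ : Measure E) [μ.IsAddHaarMeasure]
    {k : ℝ} (hk : 0 < k) (f : E → ℝ≥0∞) :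
    ∫⁻ x, f x ∂μ = ENNReal.ofReal (k ^ Module.finrank ℝ E) * ∫⁻ x, f (k • x) ∂μ := by
  have h1 : ∫⁻ x, f (k • x) ∂μ = ∫⁻ x, f x ∂(Measure.map (k • ·) μ) := by
    have := (Homeomorph.smulOfNeZero k hk.ne' (α := E)).measurableEmbedding.lintegral_map
      (μ := μ) f
    exact this.symm
  have hp : 0 < k ^ Module.finrank ℝ E := by positivity
  rw [h1, Measure.map_addHaar_smul μ hk.ne', lintegral_smul_measure, smul_eq_mul, ← mul_assoc,
    ← ENNReal.ofReal_mul hp.le, abs_of_pos (inv_pos.2 hp), mul_inv_cancel₀ hp.ne',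
    ENNReal.ofReal_one, one_mul]

lemma lintegral_radial_lt_top {E : Type*} [NormedAddCommGroup E] [NormedSpace ℝ E]
    [MeasurableSpace E] [BorelSpace E] [FiniteDimensional ℝ E] [Nontrivial E]
    (μ : Measure E) [μ.IsAddHaarMeasure] (a R g : ℝ)
    (h : IntegrableOn (fun y : ℝ => y ^ (Module.finrank ℝ E - 1) * |y - a| ^ (-g)) (Set.Ioo 0 R)) :
    ∫⁻ x in Metric.ball (0 : E) R, ENNReal.ofReal (|‖x‖ - a|) ^ (-g) ∂μ < ⊤ := by
  have h2 : IntegrableOn (fun x : E => |‖x‖ - a| ^ (-g)) (Metric.ball 0 R) μ :=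
    (integrableOn_fun_norm_addHaar μ (f := fun y : ℝ => |y - a| ^ (-g))).2 (by simpa using h)
  have h3 := h2.lintegral_lt_top
  refine lt_of_eq_of_lt ?_ h3
  refine lintegral_congr_ae (ae_restrict_of_ae ?_)
  have hs : μ (Metric.sphere (0 : E) a) = 0 := Measure.addHaar_sphere μ 0 a
  have : ∀ᵐ x ∂μ, x ∉ Metric.sphere (0 : E) a := measure_eq_zero_iff_ae_notMem.1 hs
  filter_upwards [this] with x hx
  rw [ENNReal.ofReal_rpow_of_pos]
  rw [abs_pos]
  intro h0
  apply hx
  simp; linarith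

lemma intOn_abs {R g : ℝ} (hR : 0 < R) (hg : g < 1) :
    IntegrableOn (fun y : ℝ => |y| ^ (-g)) (Metric.ball 0 R) := by
  have := (integrableOn_fun_norm_addHaar (volume : Measure ℝ) (r := R)
    (f := fun y : ℝ => y ^ (-g))).2 (by
      simpa using (intervalIntegral.integrableOn_Ioo_rpow_iff hR).2 (by linarith))
  simpa using this

lemma intOn_one (n : ℕ) {R g : ℝ} (hR : 0 < R) (hg : g < 1) :
    IntegrableOn (fun y : ℝ => y ^ n * |y - 1| ^ (-g)) (Set.Ioo 0 R) := by
  have h1 := intOn_abs (R := R + 2) (by linarith) hg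
  have h2 : IntervalIntegrable (fun y : ℝ => |y| ^ (-g)) volume (0 - 1) (R - 1) := by
    rw [intervalIntegrable_iff]
    refine h1.mono_set ?_
    intro x hx
    rw [Set.uIoc_of_le (by linarith)] at hx
    rw [Metric.mem_ball, dist_zero_right, Real.norm_eq_abs, abs_lt]
    constructor <;> linarith [hx.1, hx.2]
  have h3 := h2.comp_sub_right 1
  simp only [sub_add_cancel] at h3
  rw [← intervalIntegrable_iff_integrableOn_Ioo_of_le hR.le]
  exact h3.continuousOn_mul (by fun_prop)

lemma radA : ∫⁻ x in Metric.ball (0 : ℝ) 1, ENNReal.ofReal |x| ^ (-(9/10) : ℝ) < ⊤ := by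
  have := lintegral_radial_lt_top (volume : Measure ℝ) 0 1 (9/10) (by
    have := (intervalIntegral.integrableOn_Ioo_rpow_iff (s := -(9/10)) one_pos).2 (by norm_num)
    refine this.congr_fun ?_ measurableSet_Ioo
    intro y hy
    simp [abs_of_pos hy.1])
  simpa using this

lemma radB : ∫⁻ x in Metric.ball (0 : ℝ) 1, ENNReal.ofReal (|‖x‖ - 1|) ^ (-(1/2) : ℝ) < ⊤ :=
  lintegral_radial_lt_top (volume : Measure ℝ) 1 1 (1/2) (intOn_one _ one_pos (by norm_num))

lemma radC : ∫⁻ x in Metric.ball (0 : E3) 2, ENNReal.ofReal (|‖x‖ - 1|) ^ (-(9/10) : ℝ) < ⊤ :=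
  lintegral_radial_lt_top (volume : Measure E3) 1 2 (9/10) (intOn_one _ two_pos (by norm_num))

lemma radD : ∫⁻ x in Metric.ball (0 : E3) 1, ENNReal.ofReal ‖x‖ ^ (-(27/10) : ℝ) < ⊤ := by
  have := lintegral_radial_lt_top (volume : Measure E3) 0 1 (27/10) (by
    have := (intervalIntegral.integrableOn_Ioo_rpow_iff (s := -(7/10)) one_pos).2 (by norm_num)
    refine this.congr_fun ?_ measurableSet_Ioo
    intro y hy
    simp only [finrank_euclideanSpace, Fintype.card_fin, sub_zero, abs_of_pos hy.1]
    rw [← Real.rpow_natCast, ← Real.rpow_add hy.1]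
    norm_num)
  simpa using this

lemma slice1 : ∃ C : ℝ≥0∞, C < ⊤ ∧ ∀ m : ℝ,
    ∫⁻ w : ℝ, (if w ^ 2 < m then ENNReal.ofReal (m - w ^ 2) ^ (-(1/2) : ℝ) else 0) ≤ C := by
  refine ⟨_, radB, fun m => ?_⟩
  by_cases hm : m ≤ 0
  · rw [lintegral_congr (g := fun _ => 0)]
    · simp
    · intro w
      rw [if_neg]
      nlinarith [sq_nonneg w]
  push Not at hm
  obtain ⟨n, hn, rfl⟩ : ∃ n : ℝ, 0 < n ∧ m = n ^ 2 :=
    ⟨√m, Real.sqrt_pos.2 hm, (Real.sq_sqrt hm.le).symm⟩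
  rw [scale_lintegral volume hn, ← lintegral_const_mul' _ _ (by simp),
    ← lintegral_indicator measurableSet_ball]
  refine lintegral_mono fun v => ?_
  simp only [Module.finrank_self, pow_one, smul_eq_mul, mul_pow]
  by_cases hv : |v| < 1
  · have hv2 : v ^ 2 < 1 := by rw [← sq_abs]; nlinarith [abs_nonneg v]
    rw [if_pos (by nlinarith), Set.indicator_of_mem (by simpa using hv)]
    have e1 : n ^ 2 - n ^ 2 * v ^ 2 = n ^ 2 * (1 - v ^ 2) := by ring
    rw [e1, ENNReal.ofReal_mul (by positivity), ENNReal.mul_rpow_of_ne_top (by simp) (by simp),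
      ← mul_assoc]
    have e2 : ENNReal.ofReal n * ENNReal.ofReal (n ^ 2) ^ (-(1/2) : ℝ) = 1 := by
      rw [ENNReal.ofReal_rpow_of_pos (by positivity), ← ENNReal.ofReal_mul hn.le,
        ← Real.rpow_natCast, ← Real.rpow_mul hn.le]
      norm_num [Real.rpow_neg_one, hn.ne']
    rw [e2, one_mul]
    refine rpow_anti (ENNReal.ofReal_le_ofReal ?_) (by norm_num)
    rw [Real.norm_eq_abs, abs_of_nonpos (by linarith), ← sq_abs v]
    nlinarith [abs_nonneg v]
  · rw [if_neg]
    · simp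
    · have : 1 ≤ v ^ 2 := by rw [← sq_abs]; nlinarith [abs_nonneg v]
      nlinarith [sq_nonneg n]

/-- uniform bound for the shifted singularity in one dimension -/
lemma lineA (t : ℝ) : ∃ C : ℝ≥0∞, C < ⊤ ∧ ∀ c : ℝ,
    ∫⁻ z in Metric.ball (0 : ℝ) t, ENNReal.ofReal |z + c| ^ (-(9/10) : ℝ) ≤ C := by
  refine ⟨volume (Metric.ball (0 : ℝ) t) + _, ENNReal.add_lt_top.2 ⟨measure_ball_lt_top, radA⟩,
    fun c => ?_⟩
  set F : ℝ → ℝ≥0∞ := (Metric.ball (0 : ℝ) 1).indicator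
    (fun x => ENNReal.ofReal |x| ^ (-(9/10) : ℝ)) with hF
  have h1 : ∀ z, ENNReal.ofReal |z + c| ^ (-(9/10) : ℝ) ≤ 1 + F (z + c) := by
    intro z
    by_cases h : |z + c| < 1
    · rw [hF, Set.indicator_of_mem (by simpa using h)]
      exact le_add_self
    · refine le_add_right ?_
      have := rpow_anti (x := 1) (y := ENNReal.ofReal |z + c|) (g := 9/10)
        (by simpa using not_lt.1 h) (by norm_num)
      simpa using this
  have hFm : Measurable F := Measurable.indicator (by fun_prop) measurableSet_ball
  calc _ ≤ ∫⁻ z in Metric.ball (0 : ℝ) t, (1 + F (z + c)) := lintegral_mono h1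
    _ = volume (Metric.ball (0 : ℝ) t) + ∫⁻ z in Metric.ball (0 : ℝ) t, F (z + c) := by
        rw [lintegral_add_left measurable_const]; simp
    _ ≤ volume (Metric.ball (0 : ℝ) t) + ∫⁻ z, F (z + c) := by
        gcongr; exact Measure.restrict_le_self
    _ = _ := by
        rw [lintegral_add_right_eq_self F c, hF, lintegral_indicator measurableSet_ball]

lemma ballD : ∃ C : ℝ≥0∞, C < ⊤ ∧ ∀ q : E3,
    ∫⁻ z in Metric.ball (0 : E3) 2, ENNReal.ofReal ‖z - q‖ ^ (-(27/10) : ℝ) ≤ C := by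
  refine ⟨volume (Metric.ball (0 : E3) 2) + _, ENNReal.add_lt_top.2 ⟨measure_ball_lt_top, radD⟩,
    fun c => ?_⟩
  set F : E3 → ℝ≥0∞ := (Metric.ball (0 : E3) 1).indicator
    (fun x => ENNReal.ofReal ‖x‖ ^ (-(27/10) : ℝ)) with hF
  have h1 : ∀ z, ENNReal.ofReal ‖z - c‖ ^ (-(27/10) : ℝ) ≤ 1 + F (z - c) := by
    intro z
    by_cases h : ‖z - c‖ < 1
    · rw [hF, Set.indicator_of_mem (by simpa using h)]
      exact le_add_self
    · refine le_add_right ?_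
      have := rpow_anti (x := 1) (y := ENNReal.ofReal ‖z - c‖) (g := 27/10)
        (by rw [← ENNReal.ofReal_one]; exact ENNReal.ofReal_le_ofReal (not_lt.1 h)) (by norm_num)
      simpa using this
  have hFm : Measurable F := Measurable.indicator (by fun_prop) measurableSet_ball
  calc _ ≤ ∫⁻ z in Metric.ball (0 : E3) 2, (1 + F (z - c)) := lintegral_mono h1
    _ = volume (Metric.ball (0 : E3) 2) + ∫⁻ z in Metric.ball (0 : E3) 2, F (z - c) := by
        rw [lintegral_add_left measurable_const]; simp
    _ ≤ volume (Metric.ball (0 : E3) 2) + ∫⁻ z, F (z - c) := by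
        gcongr; exact Measure.restrict_le_self
    _ = _ := by
        rw [lintegral_sub_right_eq_self F c, hF, lintegral_indicator measurableSet_ball]

lemma J0 (t : ℝ) : ∃ C : ℝ≥0∞, C < ⊤ ∧ ∀ c : ℝ,
    ∫⁻ z : E3, (if ‖z‖ < t then ENNReal.ofReal (t ^ 2 - ‖z‖ ^ 2) ^ (-(1/2) : ℝ) *
      ENNReal.ofReal |z 0 + c| ^ (-(9/10) : ℝ) else 0) ≤ C := by
  obtain ⟨C1, hC1, H1⟩ := slice1
  obtain ⟨C2, hC2, H2⟩ := lineA t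
  refine ⟨C2 * (volume (Metric.ball (0 : ℝ) t) * C1),
    ENNReal.mul_lt_top hC2 (ENNReal.mul_lt_top measure_ball_lt_top hC1), fun c => ?_⟩
  -- the slice functions
  set A : ℝ → ℝ≥0∞ := (Metric.ball (0 : ℝ) t).indicator
    (fun z => ENNReal.ofReal |z + c| ^ (-(9/10) : ℝ)) with hA
  set B : ℝ → ℝ≥0∞ := (Metric.ball (0 : ℝ) t).indicator (fun _ => 1) with hB
  set S : ℝ → ℝ → ℝ≥0∞ := fun m w =>
    if w ^ 2 < m then ENNReal.ofReal (m - w ^ 2) ^ (-(1/2) : ℝ) else 0 with hS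
  have hAm : Measurable A := Measurable.indicator (by fun_prop) measurableSet_ball
  have hBm : Measurable B := Measurable.indicator (by fun_prop) measurableSet_ball
  have hSm : Measurable (fun x : ℝ × ℝ => S x.1 x.2) :=
    Measurable.ite (measurableSet_lt (by fun_prop) (by fun_prop)) (by fun_prop) measurable_const
  have hle : ∀ z : E3, (if ‖z‖ < t then ENNReal.ofReal (t ^ 2 - ‖z‖ ^ 2) ^ (-(1/2) : ℝ) *
      ENNReal.ofReal |z 0 + c| ^ (-(9/10) : ℝ) else 0) ≤
      A (z 0) * (B (z 1) * S (t ^ 2 - z 0 ^ 2 - z 1 ^ 2) (z 2)) := by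
    intro z
    split_ifs with h
    · have hn : ‖z‖ ^ 2 = z 0 ^ 2 + z 1 ^ 2 + z 2 ^ 2 := by
        rw [EuclideanSpace.norm_sq_eq, Fin.sum_univ_three]; simp
      have hlt : ‖z‖ ^ 2 < t ^ 2 := by nlinarith [norm_nonneg z]
      have ht : 0 < t := lt_of_le_of_lt (norm_nonneg z) h
      have h0 : |z 0| < t := abs_lt_of_sq_lt_sq (by nlinarith [sq_nonneg (z 1), sq_nonneg (z 2)]) ht.le
      have h1 : |z 1| < t := abs_lt_of_sq_lt_sq (by nlinarith [sq_nonneg (z 0), sq_nonneg (z 2)]) ht.le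
      rw [hA, hB, hS, Set.indicator_of_mem (by simpa using h0),
        Set.indicator_of_mem (by simpa using h1)]
      simp only
      rw [if_pos (by linarith), one_mul, mul_comm]
      refine le_of_eq ?_
      congr 3
      rw [hn]; ring
    · exact zero_le
  refine (lintegral_mono hle).trans ?_
  let F : (Fin 3 → ℝ) → ℝ≥0∞ := fun z =>
    A (z 0) * (B (z 1) * S (t ^ 2 - z 0 ^ 2 - z 1 ^ 2) (z 2))
  let F1 : ℝ × (Fin 2 → ℝ) → ℝ≥0∞ := fun z =>
    A z.1 * (B (z.2 0) * S (t ^ 2 - z.1 ^ 2 - z.2 0 ^ 2) (z.2 1))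
  have e1 : ∫⁻ z : E3, A (z 0) * (B (z 1) * S (t ^ 2 - z 0 ^ 2 - z 1 ^ 2) (z 2)) =
      ∫⁻ z : Fin 3 → ℝ, F z :=
    (EuclideanSpace.volume_preserving_symm_measurableEquiv_toLp (Fin 3)).lintegral_comp_emb
      (MeasurableEquiv.measurableEmbedding _) F
  have e2 : ∫⁻ z : Fin 3 → ℝ, F z = ∫⁻ z : ℝ × (Fin 2 → ℝ), F1 z :=
    (volume_preserving_piFinSuccAbove (fun _ : Fin 3 => ℝ) 0).lintegral_comp_emb
      (MeasurableEquiv.measurableEmbedding _) F1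
  have hF1 : Measurable F1 := by
    have a1 : Measurable fun z : ℝ × (Fin 2 → ℝ) => S (t ^ 2 - z.1 ^ 2 - z.2 0 ^ 2) (z.2 1) :=
      hSm.comp (f := fun z : ℝ × (Fin 2 → ℝ) => (t ^ 2 - z.1 ^ 2 - z.2 0 ^ 2, z.2 1))
        (by fun_prop)
    exact (hAm.comp measurable_fst).mul
      ((hBm.comp (by fun_prop : Measurable fun z : ℝ × (Fin 2 → ℝ) => z.2 0)).mul a1)
  have e3 : ∀ x : ℝ, ∫⁻ y : Fin 2 → ℝ, B (y 0) * S (t ^ 2 - x ^ 2 - y 0 ^ 2) (y 1) ≤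
      volume (Metric.ball (0 : ℝ) t) * C1 := by
    intro x
    let F2 : ℝ × ℝ → ℝ≥0∞ := fun y => B y.1 * S (t ^ 2 - x ^ 2 - y.1 ^ 2) y.2
    have a1 : ∫⁻ y : Fin 2 → ℝ, B (y 0) * S (t ^ 2 - x ^ 2 - y 0 ^ 2) (y 1) =
      ∫⁻ y : ℝ × ℝ, F2 y := (volume_preserving_finTwoArrow ℝ).lintegral_comp_emb
        (MeasurableEquiv.measurableEmbedding _) F2
    have hF2 : Measurable F2 :=
      (hBm.comp measurable_fst).mul (hSm.comp
        (f := fun y : ℝ × ℝ => (t ^ 2 - x ^ 2 - y.1 ^ 2, y.2)) (by fun_prop))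
    rw [a1, Measure.volume_eq_prod, lintegral_prod _ hF2.aemeasurable]
    calc _ ≤ ∫⁻ y : ℝ, B y * C1 := by
          refine lintegral_mono fun y => ?_
          simp only [F2]
          rw [lintegral_const_mul]
          · gcongr
            exact H1 _
          · exact hSm.comp (f := fun w : ℝ => (t ^ 2 - x ^ 2 - y ^ 2, w)) (by fun_prop)
      _ = _ := by
          rw [lintegral_mul_const _ hBm, hB, lintegral_indicator measurableSet_ball]
          simp
  rw [e1, e2, Measure.volume_eq_prod, lintegral_prod _ hF1.aemeasurable]
  calc _ ≤ ∫⁻ x : ℝ, A x * (volume (Metric.ball (0 : ℝ) t) * C1) := by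
        refine lintegral_mono fun x => ?_
        simp only [F1]
        rw [lintegral_const_mul]
        · gcongr
          exact e3 x
        · exact (hBm.comp (by fun_prop : Measurable fun y : Fin 2 → ℝ => y 0)).mul
            (hSm.comp (f := fun y : Fin 2 → ℝ => (t ^ 2 - x ^ 2 - y 0 ^ 2, y 1)) (by fun_prop))
    _ ≤ _ := by
        rw [lintegral_mul_const _ hAm, hA, lintegral_indicator measurableSet_ball]
        gcongr
        exact H2 c

lemma exists_rot (p : E3) (hp : p ≠ 0) : ∃ L : E3 ≃ₗᵢ[ℝ] E3, ∀ z : E3,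
    inner ℝ p (L z) = ‖p‖ * z 0 := by
  have hp' : 0 < ‖p‖ := norm_pos_iff.2 hp
  let e : E3 := EuclideanSpace.single 0 1
  let v : E3 := ‖p‖⁻¹ • p
  have hv : ‖e‖ = ‖v‖ := by
    simp [e, v, norm_smul, hp'.ne']
  obtain ⟨L, h⟩ : ∃ L : E3 ≃ₗᵢ[ℝ] E3, L e = v := ⟨_, Submodule.reflection_sub hv⟩
  refine ⟨L, fun z => ?_⟩
  have h2 : p = ‖p‖ • v := by simp [v, smul_smul, hp'.ne']
  conv_lhs => rw [h2, ← h]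
  rw [real_inner_smul_left, LinearIsometryEquiv.inner_map_map]
  simp [e, EuclideanSpace.inner_single_left]

lemma Jb (t : ℝ) : ∃ C : ℝ≥0∞, C < ⊤ ∧ ∀ (p : E3) (c : ℝ), p ≠ 0 →
    ∫⁻ z : E3, (if ‖z‖ < t then ENNReal.ofReal (t ^ 2 - ‖z‖ ^ 2) ^ (-(1/2) : ℝ) *
      ENNReal.ofReal |inner ℝ p z + c| ^ (-(9/10) : ℝ) else 0) ≤
      C * ENNReal.ofReal ‖p‖ ^ (-(9/10) : ℝ) := by
  obtain ⟨C, hC, H⟩ := J0 t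
  refine ⟨C, hC, fun p c hp => ?_⟩
  have hp' : 0 < ‖p‖ := norm_pos_iff.2 hp
  obtain ⟨L, hL⟩ := exists_rot p hp
  rw [← (L.measurePreserving).lintegral_comp_emb L.toHomeomorph.measurableEmbedding]
  refine le_trans (le_of_eq ?_) (mul_le_mul_left (H (c / ‖p‖)) _)
  rw [← lintegral_mul_const']
  · refine lintegral_congr fun z => ?_
    rw [L.norm_map, hL]
    split_ifs with h
    · have : ‖p‖ * z 0 + c = ‖p‖ * (z 0 + c / ‖p‖) := by field_simp
      rw [this, abs_mul, abs_of_pos hp', ENNReal.ofReal_mul hp'.le,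
        ENNReal.mul_rpow_of_ne_top (by simp) (by simp)]
      ring
    · simp
  · rw [ENNReal.ofReal_rpow_of_pos hp']; simp

noncomputable def Dd (p r s : E3) : ℝ := ‖r + p‖ ^ 2 - ‖r‖ ^ 2 + ‖s - p‖ ^ 2 - ‖s‖ ^ 2

open Classical in
noncomputable def Kf (t : ℝ) (p r s : E3) : ℝ≥0∞ :=
  if (‖r‖ < 1 ∧ 1 < ‖r + p‖) ∧ (‖s‖ < t ∧ t < ‖s - p‖) then ENNReal.ofReal (1 / Dd p r s ^ 2) else 0

noncomputable def Kk (t : ℝ) (p r : E3) : ℝ≥0∞ := ∫⁻ s, Kf t p r s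

lemma Kf_meas (t : ℝ) : Measurable fun x : (E3 × E3) × E3 => Kf t x.1.1 x.1.2 x.2 := by
  unfold Kf Dd
  refine Measurable.ite ?_ (by fun_prop) measurable_const
  have h1 : MeasurableSet {x : (E3 × E3) × E3 | ‖x.1.2‖ < 1} :=
    measurableSet_lt (by fun_prop) (by fun_prop)
  have h2 : MeasurableSet {x : (E3 × E3) × E3 | 1 < ‖x.1.2 + x.1.1‖} :=
    measurableSet_lt (by fun_prop) (by fun_prop)
  have h3 : MeasurableSet {x : (E3 × E3) × E3 | ‖x.2‖ < t} :=
    measurableSet_lt (by fun_prop) (by fun_prop)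
  have h4 : MeasurableSet {x : (E3 × E3) × E3 | t < ‖x.2 - x.1.1‖} :=
    measurableSet_lt (by fun_prop) (by fun_prop)
  exact (h1.inter h2).inter (h3.inter h4)

lemma Kk_meas (t : ℝ) : Measurable fun x : E3 × E3 => Kk t x.1 x.2 :=
  (Kf_meas t).lintegral_prod_right'

lemma Dd_sub (p r s : E3) : (‖r + p‖ ^ 2 - ‖r‖ ^ 2) - (‖s - p‖ ^ 2 - ‖s‖ ^ 2) =
    2 * (inner ℝ p s + inner ℝ p r) := by
  rw [norm_add_sq_real, norm_sub_sq_real, real_inner_comm s p, real_inner_comm r p]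
  ring

lemma Kk_le1 (t : ℝ) (ht : 0 < t) : ∃ C : ℝ≥0∞, C < ⊤ ∧ ∀ (p r : E3) (x : ℝ), 0 < x →
    x ≤ ‖r + p‖ ^ 2 - ‖r‖ ^ 2 → p ≠ 0 → Kk t p r ≤
      C * (ENNReal.ofReal x ^ (-(9/10) : ℝ) + ENNReal.ofReal ‖p‖ ^ (-(27/10) : ℝ)) := by
  obtain ⟨C, hC, H⟩ := Jb t
  refine ⟨C, hC, fun p r x hx hxle hp => ?_⟩
  have hp' : 0 < ‖p‖ := norm_pos_iff.2 hp
  have key : ∀ s, Kf t p r s ≤ ENNReal.ofReal x ^ (-(3/5) : ℝ) *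
      (if ‖s‖ < t then ENNReal.ofReal (t ^ 2 - ‖s‖ ^ 2) ^ (-(1/2) : ℝ) *
      ENNReal.ofReal |inner ℝ p s + inner ℝ p r| ^ (-(9/10) : ℝ) else 0) := by
    intro s
    unfold Kf
    split_ifs with h h2 h3
    · have hs1 : ‖s‖ ^ 2 < t ^ 2 := by nlinarith [norm_nonneg s]
      have hs2 : t ^ 2 < ‖s - p‖ ^ 2 := by nlinarith
      have hsub := Dd_sub p r s
      have d1 : x ≤ Dd p r s := by unfold Dd; linarith
      have d2 : t ^ 2 - ‖s‖ ^ 2 ≤ Dd p r s := by unfold Dd; linarith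
      have d3 : |inner ℝ p s + inner ℝ p r| ≤ Dd p r s := by
        unfold Dd
        rw [abs_le]
        constructor <;> linarith
      have hD : 0 < Dd p r s := lt_of_lt_of_le hx d1
      set d := Dd p r s
      have e : ENNReal.ofReal (1 / d ^ 2) = ENNReal.ofReal d ^ (-(3/5) : ℝ) *
          (ENNReal.ofReal d ^ (-(1/2) : ℝ) * ENNReal.ofReal d ^ (-(9/10) : ℝ)) := by
        rw [← ENNReal.rpow_add _ _ (by simpa using hD) (by simp),
          ← ENNReal.rpow_add _ _ (by simpa using hD) (by simp), ENNReal.ofReal_rpow_of_pos hD]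
        congr 1
        norm_num
      rw [e]
      gcongr ?_ * (?_ * ?_)
      · exact rpow_anti (ENNReal.ofReal_le_ofReal d1) (by norm_num)
      · exact rpow_anti (ENNReal.ofReal_le_ofReal d2) (by norm_num)
      · exact rpow_anti (ENNReal.ofReal_le_ofReal d3) (by norm_num)
    · exact absurd h.2.1 h2
    · exact zero_le
    · exact zero_le
  have hfin : ENNReal.ofReal x ^ (-(3/5) : ℝ) ≠ ⊤ := by
    rw [ENNReal.ofReal_rpow_of_pos hx]; simp
  have young : ∀ a b : ℝ≥0∞, a * b ≤ a ^ (3/2 : ℝ) + b ^ (3 : ℝ) := by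
    intro a b
    have h := ENNReal.young_inequality a b (p := 3/2) (q := 3)
      (by rw [Real.holderConjugate_iff]; norm_num)
    refine h.trans (add_le_add ?_ ?_)
    · exact ENNReal.div_le_of_le_mul (le_mul_of_one_le_right' (by simp; norm_num))
    · exact ENNReal.div_le_of_le_mul (le_mul_of_one_le_right' (by simp))
  calc Kk t p r ≤ _ := lintegral_mono key
    _ = _ := lintegral_const_mul' _ _ hfin
    _ ≤ ENNReal.ofReal x ^ (-(3/5) : ℝ) * (C * ENNReal.ofReal ‖p‖ ^ (-(9/10) : ℝ)) := by
        gcongr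
        exact H p _ hp
    _ = C * (ENNReal.ofReal x ^ (-(3/5) : ℝ) * ENNReal.ofReal ‖p‖ ^ (-(9/10) : ℝ)) := by ring
    _ ≤ _ := by
        gcongr
        refine (young _ _).trans (le_of_eq ?_)
        rw [← ENNReal.rpow_mul, ← ENNReal.rpow_mul]
        norm_num

lemma Kk_le2 (t : ℝ) (ht : 0 < t) (p r : E3) (x : ℝ) (hx : 0 < x)
    (hxle : x ≤ ‖r + p‖ ^ 2 - ‖r‖ ^ 2) :
    Kk t p r ≤ volume (Metric.ball (0 : E3) t) * ENNReal.ofReal (1 / x ^ 2) := by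
  calc Kk t p r ≤ ∫⁻ s, (Metric.ball (0 : E3) t).indicator
        (fun _ => ENNReal.ofReal (1 / x ^ 2)) s := by
        refine lintegral_mono fun s => ?_
        unfold Kf
        split_ifs with h
        · rw [Set.indicator_of_mem (by simpa using h.2.1)]
          have hs : ‖s‖ ^ 2 < ‖s - p‖ ^ 2 := by nlinarith [norm_nonneg s]
          have d1 : x ≤ Dd p r s := by unfold Dd; linarith
          gcongr
        · exact zero_le
    _ = _ := by rw [lintegral_indicator measurableSet_ball]; simp [mul_comm]

lemma Kk_zero (t : ℝ) (p r : E3) (h : ¬ (‖r‖ < 1 ∧ 1 < ‖r + p‖)) : Kk t p r = 0 := by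
  unfold Kk Kf
  simp [h]

lemma ofReal_frac_mul {a b : ℝ} (C : ℝ≥0∞) (ha : 0 < a) (hb : 1 ≤ a * b) :
    C ≤ C * ENNReal.ofReal a * ENNReal.ofReal b := by
  rw [mul_assoc, ← ENNReal.ofReal_mul ha.le]
  refine le_mul_of_one_le_right' ?_
  rw [← ENNReal.ofReal_one]
  exact ENNReal.ofReal_le_ofReal hb

lemma W1_le (t : ℝ) (ht : 0 < t) : ∃ C : ℝ≥0∞, C < ⊤ ∧ ∀ q : E3,
    ∫⁻ r, Kk t (q - r) r ≤ C * ENNReal.ofReal (1 / (1 + ‖q‖ ^ 4)) := by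
  obtain ⟨C1, hC1, H1⟩ := Kk_le1 t ht
  obtain ⟨C2, hC2, H2⟩ := ballD
  have hC3 := radC
  set C3 := ∫⁻ x in Metric.ball (0 : E3) 2, ENNReal.ofReal (|‖x‖ - 1|) ^ (-(9/10) : ℝ)
  set V := volume (Metric.ball (0 : E3) t)
  set V1 := volume (Metric.ball (0 : E3) 1)
  have hV : V < ⊤ := measure_ball_lt_top
  have hV1 : V1 < ⊤ := measure_ball_lt_top
  refine ⟨C1 * (C3 + C2) * ENNReal.ofReal 17 + V * V1 * ENNReal.ofReal 8, ?_, fun q => ?_⟩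
  · finiteness
  rcases le_or_gt ‖q‖ 1 with hq | hq
  · rw [lintegral_congr (g := fun _ => 0)]
    · simp
    · intro r
      refine Kk_zero _ _ _ ?_
      simp [hq]
  rw [add_mul]
  rcases lt_or_ge ‖q‖ 2 with hq2 | hq2
  · refine le_add_right ?_
    refine le_trans ?_ (ofReal_frac_mul _ (by norm_num) ?_)
    · have : ∀ r, Kk t (q - r) r ≤ (Metric.ball (0 : E3) 2).indicator (fun r =>
        C1 * (ENNReal.ofReal (|‖r‖ - 1|) ^ (-(9/10) : ℝ) +
          ENNReal.ofReal ‖r - q‖ ^ (-(27/10) : ℝ))) r := by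
        intro r
        by_cases hr : ‖r‖ < 1
        · rw [Set.indicator_of_mem (by simp; linarith)]
          have hne : q - r ≠ 0 := by
            rw [sub_ne_zero]; rintro rfl; linarith
          have := H1 (q - r) r (|‖r‖ - 1|) (by rw [abs_pos]; linarith)
            (by rw [abs_of_neg (by linarith), add_sub_cancel]; nlinarith [norm_nonneg r]) hne
          rwa [norm_sub_rev] at this
        · rw [Kk_zero _ _ _ (by tauto)]; exact zero_le
      refine (lintegral_mono this).trans ?_
      rw [lintegral_indicator measurableSet_ball, lintegral_const_mul _ (by fun_prop),
        lintegral_add_left (by fun_prop)]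
      gcongr
      exact H2 q
    · have h4 : ‖q‖ ^ 4 ≤ 2 ^ 4 := by gcongr
      rw [mul_one_div, le_div_iff₀ (by positivity)]
      linarith
  · refine le_add_left ?_
    have : ∀ r, Kk t (q - r) r ≤ (Metric.ball (0 : E3) 1).indicator (fun r =>
        V * ENNReal.ofReal (1 / (‖q‖ ^ 2 / 2) ^ 2)) r := by
      intro r
      by_cases hr : ‖r‖ < 1
      · rw [Set.indicator_of_mem (by simpa using hr)]
        exact Kk_le2 t ht (q - r) r (‖q‖ ^ 2 / 2) (by positivity)
          (by rw [add_sub_cancel]; nlinarith [norm_nonneg r])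
      · rw [Kk_zero _ _ _ (by tauto)]; exact zero_le
    refine (lintegral_mono this).trans ?_
    rw [lintegral_indicator measurableSet_ball]
    simp only [lintegral_const, Measure.restrict_apply_univ]
    rw [mul_right_comm, mul_assoc _ (ENNReal.ofReal 8), ← ENNReal.ofReal_mul (by norm_num)]
    refine mul_le_mul_right (ENNReal.ofReal_le_ofReal ?_) _
    have h4 : (1 : ℝ) ^ 4 ≤ ‖q‖ ^ 4 := by gcongr
    rw [mul_one_div, div_le_div_iff₀ (by positivity) (by positivity)]
    nlinarith

lemma W2_le (t : ℝ) (ht : 0 < t) : ∃ C : ℝ≥0∞, C < ⊤ ∧ ∀ r : E3,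
    ∫⁻ p, Kk t p r ≤ C * ENNReal.ofReal (1 / (1 + ‖r‖ ^ 4)) := by
  obtain ⟨C1, hC1, H1⟩ := Kk_le1 t ht
  obtain ⟨C2, hC2, H2⟩ := ballD
  have hC3 := radC
  set C3 := ∫⁻ x in Metric.ball (0 : E3) 2, ENNReal.ofReal (|‖x‖ - 1|) ^ (-(9/10) : ℝ)
  set V := volume (Metric.ball (0 : E3) t)
  have hV : V < ⊤ := measure_ball_lt_top
  have hC4 := finite_integral_one_add_norm (μ := (volume : Measure E3)) (r := 4)
    (by simp; norm_num)
  set C4 := ∫⁻ x : E3, ENNReal.ofReal ((1 + ‖x‖) ^ (-4 : ℝ))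
  refine ⟨(C1 * (C3 + C2) + V * ENNReal.ofReal 64 * C4) * ENNReal.ofReal 2, ?_, fun r => ?_⟩
  · finiteness
  by_cases hr : ‖r‖ < 1
  swap
  · rw [lintegral_congr (g := fun _ => 0)]
    · simp
    · intro p
      exact Kk_zero _ _ _ (by tauto)
  refine le_trans ?_ (ofReal_frac_mul _ (by norm_num) ?_)
  swap
  · have h4 : ‖r‖ ^ 4 ≤ 1 ^ 4 := by gcongr
    rw [mul_one_div, le_div_iff₀ (by positivity)]
    linarith
  rw [← lintegral_sub_right_eq_self _ r]
  have : ∀ q, Kk t (q - r) r ≤ (Metric.ball (0 : E3) 2).indicator (fun q =>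
        C1 * (ENNReal.ofReal (|‖q‖ - 1|) ^ (-(9/10) : ℝ) +
          ENNReal.ofReal ‖q - r‖ ^ (-(27/10) : ℝ))) q +
        V * ENNReal.ofReal 64 * ENNReal.ofReal ((1 + ‖q‖) ^ (-4 : ℝ)) := by
    intro q
    rcases le_or_gt ‖q‖ 1 with hq | hq
    · rw [Kk_zero _ _ _ (by simp [hq])]; exact zero_le
    rcases lt_or_ge ‖q‖ 2 with hq2 | hq2
    · refine le_add_right ?_
      rw [Set.indicator_of_mem (by simpa using hq2)]
      have hne : q - r ≠ 0 := by
        rw [sub_ne_zero]; rintro rfl; linarith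
      exact H1 (q - r) r (|‖q‖ - 1|) (by rw [abs_pos]; linarith)
        (by rw [abs_of_pos (by linarith), add_sub_cancel]; nlinarith [norm_nonneg r]) hne
    · refine le_add_left ?_
      refine (Kk_le2 t ht (q - r) r (‖q‖ ^ 2 / 2) (by positivity)
          (by rw [add_sub_cancel]; nlinarith [norm_nonneg r])).trans ?_
      rw [mul_assoc, ← ENNReal.ofReal_mul (by norm_num)]
      refine mul_le_mul_right (ENNReal.ofReal_le_ofReal ?_) _
      rw [Real.rpow_neg (by positivity)]
      have e : (1 + ‖q‖) ^ (4 : ℝ) = (1 + ‖q‖) ^ 4 := by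
        rw [← Real.rpow_natCast]; norm_num
      have h5 : (1 + ‖q‖) ^ 4 ≤ (2 * ‖q‖) ^ 4 := by gcongr; linarith
      rw [e, ← div_eq_mul_inv, div_le_div_iff₀ (by positivity) (by positivity)]
      nlinarith
  refine (lintegral_mono this).trans ?_
  rw [lintegral_add_right _ (by fun_prop), lintegral_indicator measurableSet_ball,
    lintegral_const_mul _ (by fun_prop), lintegral_add_left (by fun_prop),
    lintegral_const_mul _ (by fun_prop)]
  gcongr
  exact H2 r

/-- lower bound for an iterated integral on a product of balls -/
lemma lower_aux (f : E3 → E3 → ℝ≥0∞) (x y : E3) (a b : ℝ) (m : ℝ≥0∞)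
    (h : ∀ r ∈ Metric.ball x a, ∀ s ∈ Metric.ball y b, m ≤ f r s) :
    volume (Metric.ball x a) * volume (Metric.ball y b) * m ≤ ∫⁻ r, ∫⁻ s, f r s := by
  calc _ = ∫⁻ r in Metric.ball x a, ∫⁻ s in Metric.ball y b, m := by
        simp; ring
    _ ≤ ∫⁻ r in Metric.ball x a, ∫⁻ s in Metric.ball y b, f r s := by
        refine setLIntegral_mono' measurableSet_ball fun r hr => ?_
        exact setLIntegral_mono' measurableSet_ball fun s hs => h r hr s hs
    _ ≤ ∫⁻ r in Metric.ball x a, ∫⁻ s, f r s :=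
        lintegral_mono fun r => setLIntegral_le_lintegral _ _
    _ ≤ _ := setLIntegral_le_lintegral _ _

lemma W1_ge (t : ℝ) (ht : 0 < t) : ∃ c : ℝ, 0 < c ∧ ∀ q : E3, 1 < ‖q‖ →
    ENNReal.ofReal c * ENNReal.ofReal (1 / (1 + ‖q‖ ^ 4)) ≤ ∫⁻ r, Kk t (q - r) r := by
  set d : ℝ := min t 1 / 4 with hd
  have hd0 : 0 < d := by positivity
  have hdt : d ≤ t / 4 := by have := min_le_left t 1; linarith
  have hd1 : d ≤ 1 / 4 := by have := min_le_right t 1; linarith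
  set M : ℝ := 1 + (t + 2) ^ 2 with hM
  set U := volume (Metric.ball (0 : E3) (1/4)) * volume (Metric.ball (0 : E3) d) with hU
  have hUtop : U < ⊤ := ENNReal.mul_lt_top measure_ball_lt_top measure_ball_lt_top
  have hU0 : 0 < U := by
    rw [hU, ENNReal.mul_pos_iff]
    exact ⟨Metric.measure_ball_pos _ _ (by norm_num), Metric.measure_ball_pos _ _ hd0⟩
  refine ⟨U.toReal / M ^ 2, div_pos (ENNReal.toReal_pos hU0.ne' hUtop.ne) (by positivity),
    fun q hq => ?_⟩
  have hq0 : 0 < ‖q‖ := by linarith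
  have := lower_aux (fun r s => Kf t (q - r) r s) 0 (-((t - d) / ‖q‖) • q) (1/4) d
    (ENNReal.ofReal (1 / (M * ‖q‖ ^ 2) ^ 2)) ?_
  · refine le_trans ?_ this
    rw [Measure.addHaar_ball_center volume (-((t - d) / ‖q‖) • q), ← hU,
      ← ENNReal.ofReal_mul (by positivity)]
    have e : U.toReal / M ^ 2 * (1 / (1 + ‖q‖ ^ 4)) = U.toReal * (1 / (M ^ 2 * (1 + ‖q‖ ^ 4))) := by
      field_simp
    rw [e, ENNReal.ofReal_mul ENNReal.toReal_nonneg, ENNReal.ofReal_toReal hUtop.ne]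
    refine mul_le_mul_right (ENNReal.ofReal_le_ofReal ?_) _
    rw [mul_pow, ← pow_mul]
    gcongr
    norm_num
  · intro r hr s hs
    rw [mem_ball_zero_iff] at hr
    rw [mem_ball_iff_norm] at hs
    set c : E3 := -((t - d) / ‖q‖) • q with hc
    have hcn : ‖c‖ = t - d := by
      rw [hc, norm_smul, norm_neg, norm_div, norm_norm, Real.norm_of_nonneg (by linarith)]
      field_simp
    have hs1 : ‖s‖ < t := by
      have := norm_add_le (s - c) c
      rw [sub_add_cancel] at this
      linarith
    have hqc : ‖q - c‖ = ‖q‖ + (t - d) := by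
      have : q - c = (1 + (t - d) / ‖q‖) • q := by
        rw [hc, add_smul, one_smul, neg_smul, sub_neg_eq_add]
      have h0 : 0 ≤ (t - d) / ‖q‖ := div_nonneg (by linarith) hq0.le
      rw [this, norm_smul, Real.norm_of_nonneg (by linarith)]
      field_simp
    have hs2 : t < ‖s - (q - r)‖ := by
      have e : q - c = -(s - (q - r)) + (s - c) + r := by abel
      have h1 := norm_add₃_le (a := -(s - (q - r))) (b := s - c) (c := r)
      rw [← e, norm_neg, hqc] at h1
      linarith
    have hs3 : ‖s - (q - r)‖ ≤ t + ‖q‖ + 1 := by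
      have h1 := norm_sub_le s (q - r)
      have h2 := norm_sub_le q r
      linarith
    unfold Kf
    rw [add_sub_cancel, if_pos ⟨⟨by linarith, hq⟩, hs1, hs2⟩]
    have hDeq : Dd (q - r) r s = ‖q‖ ^ 2 - ‖r‖ ^ 2 + ‖s - (q - r)‖ ^ 2 - ‖s‖ ^ 2 := by
      unfold Dd; rw [add_sub_cancel]
    have hDpos : 0 < Dd (q - r) r s := by
      rw [hDeq]; nlinarith [norm_nonneg r, norm_nonneg s]
    have hs4 : ‖s - (q - r)‖ ≤ (t + 2) * ‖q‖ := by nlinarith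
    have hs5 : ‖s - (q - r)‖ ^ 2 ≤ ((t + 2) * ‖q‖) ^ 2 := by gcongr
    have hDle : Dd (q - r) r s ≤ M * ‖q‖ ^ 2 := by
      rw [hDeq, hM]; nlinarith [sq_nonneg ‖r‖, sq_nonneg ‖s‖]
    gcongr

lemma W2_ge (t : ℝ) (ht : 0 < t) : ∃ c : ℝ, 0 < c ∧ ∀ r : E3, ‖r‖ < 1 →
    ENNReal.ofReal c * ENNReal.ofReal (1 / (1 + ‖r‖ ^ 4)) ≤ ∫⁻ p, Kk t p r := by
  set M : ℝ := (4 + 2 * t) ^ 2 + (5 + 3 * t) ^ 2 with hM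
  set e : E3 := EuclideanSpace.single 0 (3 + 2 * t) with he
  have hen : ‖e‖ = 3 + 2 * t := by
    rw [he, PiLp.norm_single, Real.norm_of_nonneg (by linarith)]
  set U := volume (Metric.ball e 1) * volume (Metric.ball (0 : E3) t) with hU
  have hUtop : U < ⊤ := ENNReal.mul_lt_top measure_ball_lt_top measure_ball_lt_top
  have hU0 : 0 < U := by
    rw [hU, ENNReal.mul_pos_iff]
    exact ⟨Metric.measure_ball_pos _ _ (by norm_num), Metric.measure_ball_pos _ _ ht⟩
  refine ⟨U.toReal / M ^ 2, div_pos (ENNReal.toReal_pos hU0.ne' hUtop.ne) (by positivity),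
    fun r hr => ?_⟩
  rw [← lintegral_sub_right_eq_self _ r]
  have := lower_aux (fun q s => Kf t (q - r) r s) e 0 1 t (ENNReal.ofReal (1 / M ^ 2)) ?_
  · refine le_trans ?_ this
    rw [← hU, ← ENNReal.ofReal_mul (by positivity)]
    have e : U.toReal / M ^ 2 * (1 / (1 + ‖r‖ ^ 4)) = U.toReal * (1 / (M ^ 2 * (1 + ‖r‖ ^ 4))) := by
      field_simp
    rw [e, ENNReal.ofReal_mul ENNReal.toReal_nonneg, ENNReal.ofReal_toReal hUtop.ne]
    refine mul_le_mul_right (ENNReal.ofReal_le_ofReal ?_) _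
    gcongr
    exact le_mul_of_one_le_right (by positivity) (by nlinarith [pow_nonneg (norm_nonneg r) 4])
  · intro q hq s hs
    rw [mem_ball_zero_iff] at hs
    rw [mem_ball_iff_norm] at hq
    have hq1 : ‖q‖ < 4 + 2 * t := by
      have := norm_add_le (q - e) e
      rw [sub_add_cancel] at this
      linarith
    have hq2 : 2 + 2 * t < ‖q‖ := by
      have := norm_sub_le q (q - e)
      rw [sub_sub_cancel] at this
      linarith
    have hs2 : t < ‖s - (q - r)‖ := by
      have e : q = -(s - (q - r)) + s + r := by abel
      have h1 := norm_add₃_le (a := -(s - (q - r))) (b := s) (c := r)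
      rw [← e, norm_neg] at h1
      linarith
    have hs3 : ‖s - (q - r)‖ ≤ 5 + 3 * t := by
      have h1 := norm_sub_le s (q - r)
      have h2 := norm_sub_le q r
      linarith
    unfold Kf
    rw [add_sub_cancel, if_pos ⟨⟨hr, by linarith⟩, hs, hs2⟩]
    have hDeq : Dd (q - r) r s = ‖q‖ ^ 2 - ‖r‖ ^ 2 + ‖s - (q - r)‖ ^ 2 - ‖s‖ ^ 2 := by
      unfold Dd; rw [add_sub_cancel]
    have hDpos : 0 < Dd (q - r) r s := by
      rw [hDeq]; nlinarith [norm_nonneg r, norm_nonneg s]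
    have hs5 : ‖s - (q - r)‖ ^ 2 ≤ (5 + 3 * t) ^ 2 := by gcongr
    have hq5 : ‖q‖ ^ 2 ≤ (4 + 2 * t) ^ 2 := by gcongr
    have hDle : Dd (q - r) r s ≤ M := by
      rw [hDeq, hM]; nlinarith [sq_nonneg ‖r‖, sq_nonneg ‖s‖]
    gcongr

set_option maxHeartbeats 1000000 in
lemma T_eq (t : ℝ) (g : E3 → ℝ≥0∞) (hg : Measurable g) :
    ∫⁻ p, ∫⁻ r, (g (r + p) + g (-r)) * Kk t p r =
      ∫⁻ q, g q * ((∫⁻ r, Kk t (q - r) r) + ∫⁻ p, Kk t p (-q)) := by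
  have hK := Kk_meas t
  have m1 : Measurable fun x : E3 × E3 => g (x.2 + x.1) * Kk t x.1 x.2 :=
    (hg.comp (by fun_prop)).mul hK
  have m2 : Measurable fun x : E3 × E3 => g (-x.2) * Kk t x.1 x.2 :=
    (hg.comp (by fun_prop)).mul hK
  have m3 : Measurable fun x : E3 × E3 => Kk t (x.2 - x.1) x.1 :=
    hK.comp (f := fun x : E3 × E3 => (x.2 - x.1, x.1)) (by fun_prop)
  have m3' : Measurable fun x : E3 × E3 => Kk t (x.1 - x.2) x.2 :=
    hK.comp (f := fun x : E3 × E3 => (x.1 - x.2, x.2)) (by fun_prop)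
  have m4 : Measurable fun x : E3 × E3 => Kk t x.2 (-x.1) :=
    hK.comp (f := fun x : E3 × E3 => (x.2, -x.1)) (by fun_prop)
  have a1 : ∫⁻ p, ∫⁻ r, g (r + p) * Kk t p r = ∫⁻ q, g q * ∫⁻ r, Kk t (q - r) r := by
    rw [lintegral_lintegral_swap m1.aemeasurable]
    have b1 : ∀ r, ∫⁻ p, g (r + p) * Kk t p r = ∫⁻ q, g q * Kk t (q - r) r := by
      intro r
      rw [← lintegral_sub_right_eq_self _ r]
      simp
    simp_rw [b1]
    rw [lintegral_lintegral_swap ((hg.comp measurable_snd).mul m3).aemeasurable]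
    refine lintegral_congr fun q => ?_
    have hq : Measurable fun r => Kk t (q - r) r :=
      hK.comp (f := fun r => (q - r, r)) (by fun_prop)
    exact lintegral_const_mul _ hq
  have a2 : ∫⁻ p, ∫⁻ r, g (-r) * Kk t p r = ∫⁻ q, g q * ∫⁻ p, Kk t p (-q) := by
    rw [lintegral_lintegral_swap m2.aemeasurable, ← lintegral_neg_eq_self]
    refine lintegral_congr fun q => ?_
    simp only [neg_neg]
    have hq : Measurable fun p => Kk t p (-q) :=
      hK.comp (f := fun p => (p, -q)) (by fun_prop)
    exact lintegral_const_mul _ hq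
  simp_rw [mul_add, add_mul]
  have c1 : ∀ p, ∫⁻ r, (g (r + p) * Kk t p r + g (-r) * Kk t p r) =
      (∫⁻ r, g (r + p) * Kk t p r) + ∫⁻ r, g (-r) * Kk t p r := by
    intro p
    have hp : Measurable fun r => g (r + p) * Kk t p r :=
      (hg.comp (by fun_prop)).mul (hK.comp (f := fun r => (p, r)) (by fun_prop))
    exact lintegral_add_left hp _
  simp_rw [c1]
  rw [lintegral_add_left m1.lintegral_prod_right', a1, a2, lintegral_add_left]
  exact hg.mul m3'.lintegral_prod_right'

lemma T_bounds (t : ℝ) (ht : 0 < t) : ∃ c C : ℝ, 0 < c ∧ 0 < C ∧ ∀ g : E3 → ℝ≥0∞, Measurable g →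
    ENNReal.ofReal c * ∫⁻ q, g q * ENNReal.ofReal (1 / (1 + ‖q‖ ^ 4)) ≤
      ∫⁻ p, ∫⁻ r, (g (r + p) + g (-r)) * Kk t p r ∧
    ∫⁻ p, ∫⁻ r, (g (r + p) + g (-r)) * Kk t p r ≤
      ENNReal.ofReal C * ∫⁻ q, g q * ENNReal.ofReal (1 / (1 + ‖q‖ ^ 4)) := by
  obtain ⟨c1, hc1, L1⟩ := W1_ge t ht
  obtain ⟨c2, hc2, L2⟩ := W2_ge t ht
  obtain ⟨C1, hC1, H1⟩ := W1_le t ht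
  obtain ⟨C2, hC2, H2⟩ := W2_le t ht
  refine ⟨min c1 c2, (C1 + C2).toReal + 1, lt_min hc1 hc2, by positivity, fun g hg => ?_⟩
  rw [T_eq t g hg, ← lintegral_const_mul' _ _ (by simp), ← lintegral_const_mul' _ _ (by simp)]
  constructor
  · have hs : volume (Metric.sphere (0 : E3) 1) = 0 := Measure.addHaar_sphere volume 0 1
    have hae : ∀ᵐ q : E3, q ∉ Metric.sphere (0 : E3) 1 := measure_eq_zero_iff_ae_notMem.1 hs
    refine lintegral_mono_ae ?_
    filter_upwards [hae] with q hq
    rw [mul_left_comm]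
    gcongr
    rcases lt_trichotomy ‖q‖ 1 with h | h | h
    · refine le_add_left ?_
      refine le_trans ?_ (L2 (-q) (by simpa using h))
      rw [norm_neg]
      gcongr
      exact min_le_right _ _
    · simp [h] at hq
    · refine le_add_right ?_
      refine le_trans ?_ (L1 q h)
      gcongr
      exact min_le_left _ _
  · refine lintegral_mono fun q => ?_
    rw [mul_left_comm]
    gcongr
    have h1 : C1 + C2 ≤ ENNReal.ofReal ((C1 + C2).toReal + 1) := by
      rw [← ENNReal.ofReal_toReal (a := C1 + C2) (by finiteness)]
      refine ENNReal.ofReal_le_ofReal ?_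
      rw [ENNReal.toReal_ofReal ENNReal.toReal_nonneg]
      linarith
    refine le_trans (add_le_add (H1 q) (H2 (-q))) ?_
    rw [norm_neg, ← add_mul]
    gcongr

lemma scale_all (t k : ℝ) (hk : 0 < k) (G : E3 → ℝ) (hG0 : ∀ y, 0 ≤ G y) :
    (∫⁻ p : E3, ∫⁻ r in {r : E3 | ‖r‖ < k ∧ k < ‖r + p‖},
              ∫⁻ r' in {r' : E3 | ‖r'‖ < t * k ∧ t * k < ‖r' - p‖},
                ENNReal.ofReal ((G (r + p) + G (-r)) /
                  (‖r + p‖ ^ 2 - ‖r‖ ^ 2 + ‖r' - p‖ ^ 2 - ‖r'‖ ^ 2) ^ 2)) =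
    ENNReal.ofReal (k ^ 5) * ∫⁻ p, ∫⁻ r, (ENNReal.ofReal (G (k • (r + p))) +
      ENNReal.ofReal (G (k • (-r)))) * Kk t p r := by
  have fin3 : Module.finrank ℝ E3 = 3 := by simp
  have hn : ∀ x : E3, ‖k • x‖ = k * ‖x‖ := fun x => by
    rw [norm_smul, Real.norm_of_nonneg hk.le]
  -- innermost integral after scaling
  have s1 : ∀ p r : E3, (‖r‖ < 1 ∧ 1 < ‖r + p‖) →
      ∫⁻ r' in {r' : E3 | ‖r'‖ < t * k ∧ t * k < ‖r' - k • p‖},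
                ENNReal.ofReal ((G (k • r + k • p) + G (-(k • r))) /
                  (‖k • r + k • p‖ ^ 2 - ‖k • r‖ ^ 2 + ‖r' - k • p‖ ^ 2 - ‖r'‖ ^ 2) ^ 2) =
      ENNReal.ofReal (k ^ 3) * (ENNReal.ofReal (1 / k ^ 4) * ((ENNReal.ofReal (G (k • (r + p))) +
      ENNReal.ofReal (G (k • (-r)))) * Kk t p r)) := by
    intro p r hpr
    have hm : MeasurableSet {r' : E3 | ‖r'‖ < t * k ∧ t * k < ‖r' - k • p‖} :=
      MeasurableSet.inter (measurableSet_lt (by fun_prop) (by fun_prop) :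
          MeasurableSet {r' : E3 | ‖r'‖ < t * k})
        (measurableSet_lt (by fun_prop) (by fun_prop) :
          MeasurableSet {r' : E3 | t * k < ‖r' - k • p‖})
    rw [← lintegral_indicator hm, scale_lintegral volume hk, fin3]
    congr 1
    unfold Kk
    rw [← lintegral_const_mul' _ _ (by finiteness), ← lintegral_const_mul' _ _ (by finiteness)]
    refine lintegral_congr fun s => ?_
    unfold Kf
    have e1 : ‖k • s‖ < t * k ↔ ‖s‖ < t := by
      rw [hn, mul_comm t k]; exact mul_lt_mul_iff_right₀ hk
    have e2 : t * k < ‖k • s - k • p‖ ↔ t < ‖s - p‖ := by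
      rw [← smul_sub, hn, mul_comm t k]; exact mul_lt_mul_iff_right₀ hk
    by_cases h : ‖s‖ < t ∧ t < ‖s - p‖
    · rw [if_pos ⟨hpr, h⟩, Set.indicator_of_mem (by
        rw [Set.mem_setOf_eq, e1, e2]; exact h)]
      rw [← smul_add, ← smul_sub, ← smul_neg, hn, hn, hn, hn,
        ← ENNReal.ofReal_add (hG0 _) (hG0 _), ← ENNReal.ofReal_mul (add_nonneg (hG0 _) (hG0 _)),
        ← ENNReal.ofReal_mul (by positivity)]
      congr 1
      have : (k * ‖r + p‖) ^ 2 - (k * ‖r‖) ^ 2 + (k * ‖s - p‖) ^ 2 - (k * ‖s‖) ^ 2 =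
        k ^ 2 * Dd p r s := by unfold Dd; ring
      rw [this, mul_pow, ← pow_mul, div_mul_eq_div_div]
      norm_num
      ring
    · rw [if_neg (by tauto), Set.indicator_of_notMem (by
        rw [Set.mem_setOf_eq, e1, e2]; exact h)]
      simp
  have s2 : ∀ p : E3, (∫⁻ r in {r : E3 | ‖r‖ < k ∧ k < ‖r + k • p‖},
              ∫⁻ r' in {r' : E3 | ‖r'‖ < t * k ∧ t * k < ‖r' - k • p‖},
                ENNReal.ofReal ((G (r + k • p) + G (-r)) /
                  (‖r + k • p‖ ^ 2 - ‖r‖ ^ 2 + ‖r' - k • p‖ ^ 2 - ‖r'‖ ^ 2) ^ 2)) =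
      ENNReal.ofReal (k ^ 3) * (ENNReal.ofReal (k ^ 3) * (ENNReal.ofReal (1 / k ^ 4) *
        ∫⁻ r, (ENNReal.ofReal (G (k • (r + p))) +
      ENNReal.ofReal (G (k • (-r)))) * Kk t p r)) := by
    intro p
    have hm : MeasurableSet {r : E3 | ‖r‖ < k ∧ k < ‖r + k • p‖} :=
      MeasurableSet.inter (measurableSet_lt (by fun_prop) (by fun_prop) :
          MeasurableSet {r : E3 | ‖r‖ < k})
        (measurableSet_lt (by fun_prop) (by fun_prop) :
          MeasurableSet {r : E3 | k < ‖r + k • p‖})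
    rw [← lintegral_indicator hm, scale_lintegral volume hk, fin3]
    congr 1
    rw [← lintegral_const_mul' _ _ (by finiteness), ← lintegral_const_mul' _ _ (by finiteness)]
    refine lintegral_congr fun r => ?_
    have e1 : ‖k • r‖ < k ↔ ‖r‖ < 1 := by
      rw [hn]; exact mul_lt_iff_lt_one_right hk
    have e2 : k < ‖k • r + k • p‖ ↔ 1 < ‖r + p‖ := by
      rw [← smul_add, hn]; exact lt_mul_iff_one_lt_right hk
    by_cases h : ‖r‖ < 1 ∧ 1 < ‖r + p‖
    · rw [Set.indicator_of_mem (by rw [Set.mem_setOf_eq, e1, e2]; exact h)]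
      exact s1 p r h
    · rw [Set.indicator_of_notMem (by rw [Set.mem_setOf_eq, e1, e2]; exact h), Kk_zero t p r h]
      simp
  rw [scale_lintegral volume hk, fin3]
  simp_rw [s2]
  rw [lintegral_const_mul' _ _ (by finiteness), lintegral_const_mul' _ _ (by finiteness),
    lintegral_const_mul' _ _ (by finiteness)]
  simp_rw [← mul_assoc]
  congr 1
  rw [← ENNReal.ofReal_mul (by positivity), ← ENNReal.ofReal_mul (by positivity),
    ← ENNReal.ofReal_mul (by positivity)]
  congr 1
  field_simp

/-- Two-sided bound on the Belyakov excitation density (Proposition 3.3, eq. ngBelyakovbound):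
for Fermi momenta `k, k' > 0` and a bounded measurable `G : ℝ³ → [0,∞)`, with constants `c, C`
depending only on the ratio `k'/k`,
`c a² k⁵ ∫ G(kp)/(1+|p|⁴) dp ≤ n^{Bel}(G) ≤ C a² k⁵ ∫ G(kp)/(1+|p|⁴) dp`. -/
theorem belyakov_density_two_sided_bound :
    ∀ t : ℝ, 0 < t →
    ∃ c C : ℝ, 0 < c ∧ 0 < C ∧
    ∀ (a k k' : ℝ) (G : E3 → ℝ),
      0 < a → 0 < k → 0 < k' → k' / k = t →
      Measurable G → (∀ y, 0 ≤ G y) → (∃ M : ℝ, ∀ y, G y ≤ M) →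
      (ENNReal.ofReal (c * a ^ 2 * k ^ 5) *
          ∫⁻ p : E3, ENNReal.ofReal (G (k • p) / (1 + ‖p‖ ^ 4)))
        ≤ (ENNReal.ofReal (a ^ 2 / π ^ 4) *
            ∫⁻ p : E3, ∫⁻ r in {r : E3 | ‖r‖ < k ∧ k < ‖r + p‖},
              ∫⁻ r' in {r' : E3 | ‖r'‖ < k' ∧ k' < ‖r' - p‖},
                ENNReal.ofReal ((G (r + p) + G (-r)) /
                  (‖r + p‖ ^ 2 - ‖r‖ ^ 2 + ‖r' - p‖ ^ 2 - ‖r'‖ ^ 2) ^ 2))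
      ∧ (ENNReal.ofReal (a ^ 2 / π ^ 4) *
            ∫⁻ p : E3, ∫⁻ r in {r : E3 | ‖r‖ < k ∧ k < ‖r + p‖},
              ∫⁻ r' in {r' : E3 | ‖r'‖ < k' ∧ k' < ‖r' - p‖},
                ENNReal.ofReal ((G (r + p) + G (-r)) /
                  (‖r + p‖ ^ 2 - ‖r‖ ^ 2 + ‖r' - p‖ ^ 2 - ‖r'‖ ^ 2) ^ 2))
        ≤ ENNReal.ofReal (C * a ^ 2 * k ^ 5) *
            ∫⁻ p : E3, ENNReal.ofReal (G (k • p) / (1 + ‖p‖ ^ 4)) := by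
  intro t ht
  obtain ⟨c, C, hc, hC, H⟩ := T_bounds t ht
  refine ⟨c / π ^ 4, C / π ^ 4, by positivity, by positivity, ?_⟩
  intro a k k' G ha hk hk' hkt hGm hG0 _
  have hk2 : k' = t * k := by rw [← hkt]; field_simp
  subst hk2
  rw [scale_all t k hk G hG0]
  have hg : Measurable fun y : E3 => ENNReal.ofReal (G (k • y)) := by fun_prop
  obtain ⟨L, U⟩ := H _ hg
  have e : ∫⁻ p : E3, ENNReal.ofReal (G (k • p) / (1 + ‖p‖ ^ 4)) =
      ∫⁻ q : E3, ENNReal.ofReal (G (k • q)) * ENNReal.ofReal (1 / (1 + ‖q‖ ^ 4)) := by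
    refine lintegral_congr fun p => ?_
    rw [← ENNReal.ofReal_mul (hG0 _), mul_one_div]
  have e2 : ∀ c : ℝ, 0 < c → ENNReal.ofReal (c / π ^ 4 * a ^ 2 * k ^ 5) =
      ENNReal.ofReal (a ^ 2 / π ^ 4) * (ENNReal.ofReal (k ^ 5) * ENNReal.ofReal c) := by
    intro c hc
    rw [← ENNReal.ofReal_mul (by positivity), ← ENNReal.ofReal_mul (by positivity)]
    congr 1
    ring
  rw [e, e2 c hc, e2 C hC, mul_assoc, mul_assoc, mul_assoc, mul_assoc]
  constructor
  · gcongr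
  · gcongr
end

section
/- Let δ > 2/9, c₀, C₀ > 0 and a > 0. There exist ρ₀ > 0 and C > 0 (depending only on δ, c₀, C₀, a) such that the following holds for all 0 < ρ ≤ ρ₀. Let ε := ρ^{2/3+δ}, let k₁, k₂ satisfy c₀ ρ^{1/3} ≤ k_j ≤ C₀ ρ^{1/3} (j = 1,2), let χ : ℝ³ → [0,1] be measurable with χ(p) = 1 for |p| ≤ 4ρ^{2/9} and χ(p) = 0 for |p| ≥ 5ρ^{2/9}, and let G : ℝ³ → ℝ be bounded and measurable. With E(p,r,r') := |r+p|² − |r|² + |r'−p|² − |r'|² and W(p,r,r') := G(r+p) + G(−r) + G(r'−p) + G(−r'), define n^{Bel} := (a²/π⁴) ∫_{ℝ³} dp ∫_{|r|≤k₁<|r+p|} dr ∫_{|r'|≤k₂<|r'−p|} dr' W/E² and 𝒞 := (a²/π⁴) ∫_{ℝ³} dp ∫_{|r|≤k₁<|r+p|} dr ∫_{|r'|≤k₂<|r'−p|} dr' W χ(p)²/(E + 2ε)². Then |n^{Bel} − 𝒞| ≤ C ‖G‖_∞ ρ^{5/3 + 1/9}. -/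
open MeasureTheory Real
open scoped ENNReal

/-- scaling of the Lebesgue integral on `E3` -/
lemma lint_scale (f : E3 → ℝ≥0∞) (hf : Measurable f) (T : ℝ) (hT : 0 < T) :
    ∫⁻ p, f (T⁻¹ • p) = ENNReal.ofReal (T ^ 3) * ∫⁻ p, f p := by
  have h := Measure.map_addHaar_smul (volume : Measure E3) (r := T⁻¹) (by positivity)
  have h2 : ∫⁻ p, f (T⁻¹ • p) = ∫⁻ p, f p ∂(Measure.map (T⁻¹ • ·) (volume : Measure E3)) := by
    rw [lintegral_map hf (by fun_prop)]
  rw [h2, h, lintegral_smul_measure]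
  simp only [finrank_euclideanSpace, Fintype.card_fin, smul_eq_mul]
  congr 2
  rw [inv_pow, inv_inv, abs_of_pos (by positivity)]

lemma lint_pow_scale (n : ℕ) (s t : Set E3) (hs : MeasurableSet s) (T : ℝ) (hT : 0 < T)
    (hst : ∀ p, p ∈ t ↔ T⁻¹ • p ∈ s) :
    ∫⁻ p in t, ENNReal.ofReal (1 / ‖p‖ ^ n) =
      ENNReal.ofReal (T ^ 3 / T ^ n) * ∫⁻ p in s, ENNReal.ofReal (1 / ‖p‖ ^ n) := by
  have ht : MeasurableSet t := by
    have : t = (fun p : E3 => T⁻¹ • p) ⁻¹' s := by ext p; exact hst p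
    rw [this]
    exact hs.preimage (by fun_prop)
  rw [← lintegral_indicator hs, ← lintegral_indicator ht]
  have h := lint_scale (s.indicator fun p => ENNReal.ofReal (1 / ‖p‖ ^ n))
    (Measurable.indicator (by fun_prop) hs) T hT
  have h2 : ∀ p : E3, t.indicator (fun p => ENNReal.ofReal (1 / ‖p‖ ^ n)) p
      = ENNReal.ofReal (1 / T ^ n) *
        (s.indicator fun p => ENNReal.ofReal (1 / ‖p‖ ^ n)) (T⁻¹ • p) := by
    intro p
    by_cases hp : p ∈ t
    · rw [Set.indicator_of_mem hp, Set.indicator_of_mem ((hst p).1 hp),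
        ← ENNReal.ofReal_mul (by positivity)]
      congr 1
      rw [norm_smul, norm_inv, Real.norm_of_nonneg hT.le, mul_pow, inv_pow]
      by_cases hp0 : ‖p‖ ^ n = 0
      · simp [hp0]
      · field_simp
    · rw [Set.indicator_of_notMem hp, Set.indicator_of_notMem (fun h => hp ((hst p).2 h))]
      simp
  simp_rw [h2]
  have hm : Measurable (fun p : E3 =>
      (s.indicator fun p => ENNReal.ofReal (1 / ‖p‖ ^ n)) (T⁻¹ • p)) :=
    Measurable.comp (Measurable.indicator (by fun_prop) hs) (by fun_prop)
  rw [lintegral_const_mul _ hm, h, ← mul_assoc, ← ENNReal.ofReal_mul (by positivity)]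
  congr 2
  ring

lemma lint_inv_ball : ∃ c : ℝ, 0 < c ∧ ∀ R : ℝ, 0 < R →
    ∫⁻ p in Metric.ball (0 : E3) R, ENNReal.ofReal (1 / ‖p‖) ≤ ENNReal.ofReal (c * R ^ 2) := by
  have hfin : ∫⁻ p in Metric.ball (0 : E3) 1, ENNReal.ofReal (1 / ‖p‖ ^ 1) ≠ ⊤ := by
    have : IntegrableOn (fun p : E3 => (fun y : ℝ => 1 / y ^ 1) ‖p‖) (Metric.ball (0 : E3) 1) := by
      refine (integrableOn_fun_norm_addHaar (volume : Measure E3) (f := fun y : ℝ => 1 / y ^ 1)).2 ?_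
      simp only [finrank_euclideanSpace, Fintype.card_fin, smul_eq_mul]
      have : IntegrableOn (fun y : ℝ => y) (Set.Ioo 0 1) :=
        (continuous_id.integrableOn_Icc (a := (0:ℝ)) (b := 1)).mono_set Set.Ioo_subset_Icc_self
      refine this.congr_fun ?_ measurableSet_Ioo
      intro y hy
      have := hy.1
      field_simp
    exact this.lintegral_lt_top.ne
  set c := (∫⁻ p in Metric.ball (0 : E3) 1, ENNReal.ofReal (1 / ‖p‖ ^ 1)).toReal with hc
  refine ⟨c + 1, by positivity, fun R hR => ?_⟩
  have h := lint_pow_scale 1 (Metric.ball 0 1) (Metric.ball 0 R) measurableSet_ball R hR (by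
    intro p
    simp only [mem_ball_zero_iff, norm_smul, norm_inv, Real.norm_of_nonneg hR.le]
    rw [inv_mul_lt_one₀ hR])
  simp only [pow_one] at h hc hfin
  rw [h, ← ENNReal.ofReal_toReal hfin, ← hc, ← ENNReal.ofReal_mul (by positivity)]
  apply ENNReal.ofReal_le_ofReal
  have : R ^ 3 / R = R ^ 2 := by field_simp
  rw [this]
  nlinarith [sq_nonneg R]

lemma lint_pow_compl (n : ℕ) (hn : 4 ≤ n) : ∃ c : ℝ, 0 < c ∧ ∀ T : ℝ, 0 < T →
    ∫⁻ p in {p : E3 | T ≤ ‖p‖}, ENNReal.ofReal (1 / ‖p‖ ^ n)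
      ≤ ENNReal.ofReal (c * (T ^ 3 / T ^ n)) := by
  have hms : MeasurableSet {p : E3 | 1 ≤ ‖p‖} := measurableSet_le (by fun_prop) (by fun_prop)
  have hfin : ∫⁻ p in {p : E3 | 1 ≤ ‖p‖}, ENNReal.ofReal (1 / ‖p‖ ^ n) ≠ ⊤ := by
    have h0 : Integrable (fun p : E3 => (1 + ‖p‖) ^ (-(n : ℝ))) := by
      apply integrable_one_add_norm
      simp only [finrank_euclideanSpace, Fintype.card_fin]
      exact_mod_cast (by omega : 3 < n)
    have h1 : IntegrableOn (fun p : E3 => 1 / ‖p‖ ^ n) {p : E3 | 1 ≤ ‖p‖} := by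
      refine Integrable.mono' ((h0.const_mul (2 ^ n)).integrableOn)
        (Measurable.aestronglyMeasurable (by fun_prop)) ?_
      filter_upwards [ae_restrict_mem hms] with p hp
      have hp : 1 ≤ ‖p‖ := hp
      rw [Real.norm_of_nonneg (by positivity), Real.rpow_neg (by positivity), Real.rpow_natCast,
        ← div_eq_mul_inv, ← div_pow, ← one_div_pow]
      apply pow_le_pow_left₀ (by positivity)
      rw [div_le_div_iff₀ (by positivity) (by positivity)]
      linarith
    exact h1.lintegral_lt_top.ne
  set c := (∫⁻ p in {p : E3 | 1 ≤ ‖p‖}, ENNReal.ofReal (1 / ‖p‖ ^ n)).toReal with hc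
  refine ⟨c + 1, by positivity, fun T hT => ?_⟩
  have h := lint_pow_scale n {p : E3 | 1 ≤ ‖p‖} {p : E3 | T ≤ ‖p‖} hms T hT (by
    intro p
    simp only [Set.mem_ofPred_eq, norm_smul, norm_inv, Real.norm_of_nonneg hT.le]
    rw [le_inv_mul_iff₀ hT, mul_one])
  rw [h, ← ENNReal.ofReal_toReal hfin, ← hc, ← ENNReal.ofReal_mul (by positivity)]
  apply ENNReal.ofReal_le_ofReal
  have : 0 < T ^ 3 / T ^ n := by positivity
  nlinarith

lemma lint_1d (P k : ℝ) (hP : 0 < P) (hk : 0 ≤ k) :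
    ∫⁻ u in Set.Ioc (-(P / 2)) k, ENNReal.ofReal (π / √(P ^ 2 + 2 * P * u))
      ≤ ENNReal.ofReal (π * √(P ^ 2 + 2 * P * k) / P) := by
  have hle : -(P / 2) ≤ k := by linarith
  have hcont : ContinuousOn (fun u => π * √(P ^ 2 + 2 * P * u) / P) (Set.Icc (-(P / 2)) k) := by
    apply Continuous.continuousOn
    fun_prop
  have hpos : ∀ u ∈ Set.Ioo (-(P / 2)) k, 0 < P ^ 2 + 2 * P * u := by
    intro u hu
    have := hu.1
    nlinarith
  have hder : ∀ u ∈ Set.Ioo (-(P / 2)) k,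
      HasDerivAt (fun u => π * √(P ^ 2 + 2 * P * u) / P) (π / √(P ^ 2 + 2 * P * u)) u := by
    intro u hu
    have h1 : HasDerivAt (fun u : ℝ => P ^ 2 + 2 * P * u) (2 * P) u := by
      simpa using ((hasDerivAt_id u).const_mul (2 * P)).const_add (P ^ 2)
    have h2 := ((h1.sqrt (hpos u hu).ne').const_mul π).div_const P
    refine h2.congr_deriv ?_
    have := Real.sqrt_pos.2 (hpos u hu)
    field_simp
  have hIntOn : IntegrableOn (fun u => π / √(P ^ 2 + 2 * P * u)) (Set.Ioc (-(P / 2)) k) :=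
    intervalIntegral.integrableOn_deriv_of_nonneg hcont hder (fun u hu => by positivity)
  rw [← ofReal_integral_eq_lintegral_ofReal hIntOn (Filter.Eventually.of_forall fun u => by positivity),
    ← intervalIntegral.integral_of_le hle]
  apply ENNReal.ofReal_le_ofReal
  rw [intervalIntegral.integral_eq_sub_of_hasDerivAt_of_le hle hcont hder
    ((intervalIntegrable_iff_integrableOn_Ioc_of_le hle).2 hIntOn)]
  have : 0 ≤ π * √(P ^ 2 + 2 * P * (-(P / 2))) / P := by positivity
  linarith

lemma vol_disk (A : ℝ) :
    volume {v : Fin 2 → ℝ | v 0 ^ 2 + v 1 ^ 2 ≤ A} = ENNReal.ofReal (π * A) := by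
  rcases lt_or_ge A 0 with h | h
  · have : {v : Fin 2 → ℝ | v 0 ^ 2 + v 1 ^ 2 ≤ A} = ∅ := by
      ext v
      simp only [Set.mem_ofPred_eq, Set.mem_empty_iff_false, iff_false, not_le]
      nlinarith [sq_nonneg (v 0), sq_nonneg (v 1)]
    rw [this, measure_empty, ENNReal.ofReal_of_nonpos]
    nlinarith [pi_pos]
  · have h1 := (PiLp.volume_preserving_toLp (Fin 2)).measure_preimage
      (s := Metric.closedBall (0 : EuclideanSpace ℝ (Fin 2)) (√A))
      measurableSet_closedBall.nullMeasurableSet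
    rw [EuclideanSpace.volume_closedBall_fin_two] at h1
    have h2 : (WithLp.toLp 2 : (Fin 2 → ℝ) → EuclideanSpace ℝ (Fin 2)) ⁻¹'
        Metric.closedBall 0 (√A) = {v : Fin 2 → ℝ | v 0 ^ 2 + v 1 ^ 2 ≤ A} := by
      ext v
      simp only [Set.mem_preimage, mem_closedBall_zero_iff, Set.mem_ofPred_eq]
      rw [EuclideanSpace.norm_eq, Real.sqrt_le_sqrt_iff h]
      simp [Fin.sum_univ_two]
    rw [h2] at h1
    rw [h1, ← ENNReal.ofReal_pow (by positivity), Real.sq_sqrt h]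
    rw [mul_comm π, ENNReal.ofReal_mul h]

lemma vol_annulus (A x : ℝ) (hx : 0 ≤ x) :
    volume {v : Fin 2 → ℝ | v 0 ^ 2 + v 1 ^ 2 ≤ A ∧ A - x < v 0 ^ 2 + v 1 ^ 2}
      ≤ ENNReal.ofReal (π * x) := by
  have h1 : {v : Fin 2 → ℝ | v 0 ^ 2 + v 1 ^ 2 ≤ A ∧ A - x < v 0 ^ 2 + v 1 ^ 2}
    = {v : Fin 2 → ℝ | v 0 ^ 2 + v 1 ^ 2 ≤ A} \ {v : Fin 2 → ℝ | v 0 ^ 2 + v 1 ^ 2 ≤ A - x} := by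
    ext v; simp
  have hm : MeasurableSet {v : Fin 2 → ℝ | v 0 ^ 2 + v 1 ^ 2 ≤ A - x} :=
    measurableSet_le (by fun_prop) (by fun_prop)
  rw [h1, measure_sdiff (fun v hv => by simp only [Set.mem_ofPred_eq] at hv ⊢; linarith)
    hm.nullMeasurableSet (by rw [vol_disk]; exact ENNReal.ofReal_ne_top), vol_disk, vol_disk,
    tsub_le_iff_right]
  refine le_trans (le_of_eq ?_) ENNReal.ofReal_add_le
  congr 1
  ring

lemma ms_and {α : Type*} [MeasurableSpace α] {f g h l : α → ℝ} (hf : Measurable f)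
    (hg : Measurable g) (hh : Measurable h) (hl : Measurable l) :
    MeasurableSet {a | f a ≤ g a ∧ h a < l a} :=
  (measurableSet_le hf hg).inter (measurableSet_lt hh hl)

lemma lint_e3 (g : E3 → ℝ≥0∞) (hg : Measurable g) :
    ∫⁻ r, g r = ∫⁻ u : ℝ, ∫⁻ w : Fin 2 → ℝ, g (WithLp.toLp 2 (Fin.cons u w : Fin 3 → ℝ)) := by
  have h1 : ∫⁻ r, g r = ∫⁻ v : Fin 3 → ℝ, g (WithLp.toLp 2 v) :=
    ((PiLp.volume_preserving_toLp (Fin 3)).lintegral_comp hg).symm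
  have h2 := (volume_preserving_piFinSuccAbove (fun _ : Fin 3 => ℝ) 0).symm.lintegral_comp
    (f := fun v : Fin 3 → ℝ => g (WithLp.toLp 2 v)) (by fun_prop)
  rw [h1, ← h2, Measure.volume_eq_prod, lintegral_prod _ (by fun_prop)]
  refine lintegral_congr fun u => lintegral_congr fun w => ?_
  simp [MeasurableEquiv.piFinSuccAbove, Fin.insertNthEquiv]

lemma key_axis (P k : ℝ) (hP : 0 < P) (hk : 0 ≤ k) (e : E3)
    (he : e = WithLp.toLp 2 (Fin.cons P 0 : Fin 3 → ℝ)) :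
    ∫⁻ r in {r : E3 | ‖r‖ ≤ k ∧ k < ‖r + e‖},
      ENNReal.ofReal (1 / √(‖r + e‖ ^ 2 - ‖r‖ ^ 2) ^ 3)
      ≤ ENNReal.ofReal (π * √(P ^ 2 + 2 * P * k) / P) := by
  have hm : MeasurableSet {r : E3 | ‖r‖ ≤ k ∧ k < ‖r + e‖} :=
    ms_and (by fun_prop) (by fun_prop) (by fun_prop) (by fun_prop)
  rw [← lintegral_indicator hm, lint_e3 _ (Measurable.indicator (by fun_prop) hm)]
  refine le_trans ?_ (lint_1d P k hP hk)
  rw [← lintegral_indicator measurableSet_Ioc]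
  refine lintegral_mono fun u => ?_
  have hn1 : ∀ w : Fin 2 → ℝ, ‖(WithLp.toLp 2 (Fin.cons u w : Fin 3 → ℝ) : E3)‖ ^ 2
      = u ^ 2 + (w 0 ^ 2 + w 1 ^ 2) := by
    intro w
    rw [EuclideanSpace.norm_sq_eq]
    simp [Fin.sum_univ_succ]
  have hn2 : ∀ w : Fin 2 → ℝ, ‖(WithLp.toLp 2 (Fin.cons u w : Fin 3 → ℝ) : E3) + e‖ ^ 2
      = (u + P) ^ 2 + (w 0 ^ 2 + w 1 ^ 2) := by
    intro w
    rw [EuclideanSpace.norm_sq_eq, he]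
    simp [Fin.sum_univ_succ]
  have hmem : ∀ w : Fin 2 → ℝ,
      ((WithLp.toLp 2 (Fin.cons u w : Fin 3 → ℝ) : E3) ∈ {r : E3 | ‖r‖ ≤ k ∧ k < ‖r + e‖}) ↔
      w ∈ {v : Fin 2 → ℝ | v 0 ^ 2 + v 1 ^ 2 ≤ k ^ 2 - u ^ 2 ∧
        k ^ 2 - u ^ 2 - (P ^ 2 + 2 * P * u) < v 0 ^ 2 + v 1 ^ 2} := by
    intro w
    simp only [Set.mem_ofPred_eq]
    rw [← sq_le_sq₀ (norm_nonneg _) hk, ← sq_lt_sq₀ hk (norm_nonneg _), hn1, hn2]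
    constructor <;> rintro ⟨h1, h2⟩ <;> constructor <;> nlinarith
  by_cases hu : u ∈ Set.Ioc (-(P / 2)) k
  · rw [Set.indicator_of_mem hu]
    have hx : 0 < P ^ 2 + 2 * P * u := by
      have := hu.1
      nlinarith
    have hms : MeasurableSet {v : Fin 2 → ℝ | v 0 ^ 2 + v 1 ^ 2 ≤ k ^ 2 - u ^ 2 ∧
        k ^ 2 - u ^ 2 - (P ^ 2 + 2 * P * u) < v 0 ^ 2 + v 1 ^ 2} :=
      ms_and (by fun_prop) (by fun_prop) (by fun_prop) (by fun_prop)
    calc _ = ∫⁻ w : Fin 2 → ℝ, {v : Fin 2 → ℝ | v 0 ^ 2 + v 1 ^ 2 ≤ k ^ 2 - u ^ 2 ∧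
        k ^ 2 - u ^ 2 - (P ^ 2 + 2 * P * u) < v 0 ^ 2 + v 1 ^ 2}.indicator
          (fun _ => ENNReal.ofReal (1 / √(P ^ 2 + 2 * P * u) ^ 3)) w := by
          refine lintegral_congr fun w => ?_
          by_cases hw : (WithLp.toLp 2 (Fin.cons u w : Fin 3 → ℝ) : E3) ∈
            {r : E3 | ‖r‖ ≤ k ∧ k < ‖r + e‖}
          · rw [Set.indicator_of_mem hw, Set.indicator_of_mem ((hmem w).1 hw), hn1, hn2]
            congr 4
            ring
          · rw [Set.indicator_of_notMem hw, Set.indicator_of_notMem (fun h => hw ((hmem w).2 h))]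
      _ ≤ ENNReal.ofReal (1 / √(P ^ 2 + 2 * P * u) ^ 3) *
          ENNReal.ofReal (π * (P ^ 2 + 2 * P * u)) := by
          rw [lintegral_indicator_const hms]
          gcongr
          exact vol_annulus _ _ hx.le
      _ = _ := by
          rw [← ENNReal.ofReal_mul (by positivity)]
          congr 1
          have h1 := Real.sqrt_pos.2 hx
          have h2 := Real.sq_sqrt hx.le
          rw [div_mul_eq_mul_div, div_eq_div_iff (by positivity) (by positivity)]
          linear_combination (- π * √(P ^ 2 + 2 * P * u)) * h2
  · rw [Set.indicator_of_notMem hu, nonpos_iff_eq_zero]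
    rw [lintegral_eq_zero_iff']
    · refine Filter.Eventually.of_forall fun w => ?_
      apply Set.indicator_of_notMem
      rw [hmem]
      rintro ⟨h1, h2⟩
      apply hu
      constructor
      · nlinarith
      · nlinarith [sq_nonneg (w 0), sq_nonneg (w 1)]
    · have : Measurable (fun w : Fin 2 → ℝ => (WithLp.toLp 2 (Fin.cons u w : Fin 3 → ℝ) : E3)) := by
        have h0 : Measurable (fun w : Fin 2 → ℝ => (Fin.cons u w : Fin 3 → ℝ)) := by
          rw [measurable_pi_iff]
          intro i
          refine Fin.cases ?_ (fun j => ?_) i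
          · simp
          · simp only [Fin.cons_succ]
            fun_prop
        exact (PiLp.volume_preserving_toLp (Fin 3)).measurable.comp h0
      exact ((Measurable.indicator (by fun_prop) hm).comp this).aemeasurable

lemma key_shell (p : E3) (k : ℝ) (hp : p ≠ 0) (hk : 0 ≤ k) :
    ∫⁻ r in {r : E3 | ‖r‖ ≤ k ∧ k < ‖r + p‖},
      ENNReal.ofReal (1 / √(‖r + p‖ ^ 2 - ‖r‖ ^ 2) ^ 3)
      ≤ ENNReal.ofReal (π * √(‖p‖ ^ 2 + 2 * ‖p‖ * k) / ‖p‖) := by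
  set e : E3 := WithLp.toLp 2 (Fin.cons ‖p‖ 0 : Fin 3 → ℝ) with he
  have hep : ‖e‖ = ‖p‖ := by
    rw [← sq_eq_sq₀ (norm_nonneg _) (norm_nonneg _), EuclideanSpace.norm_sq_eq, he]
    simp [Fin.sum_univ_succ]
  let U : E3 ≃ₗᵢ[ℝ] E3 := (Submodule.span ℝ {e - p})ᗮ.reflection
  have hU : U e = p := Submodule.reflection_sub hep
  refine le_trans (le_of_eq ?_) (key_axis ‖p‖ k (norm_pos_iff.2 hp) hk e he)
  have hm : ∀ q : E3, MeasurableSet {r : E3 | ‖r‖ ≤ k ∧ k < ‖r + q‖} := fun q =>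
    ms_and (by fun_prop) (by fun_prop) (by fun_prop) (by fun_prop)
  rw [← lintegral_indicator (hm p), ← lintegral_indicator (hm e),
    ← U.measurePreserving.lintegral_comp (Measurable.indicator (by fun_prop) (hm p))]
  refine lintegral_congr fun r => ?_
  have h1 : ‖U r + p‖ = ‖r + e‖ := by rw [← hU, ← map_add, U.norm_map]
  have h2 : ‖U r‖ = ‖r‖ := U.norm_map r
  simp only [Set.indicator, Set.mem_ofPred_eq, h1, h2]

lemma key_shell' (p : E3) (k : ℝ) (hp : p ≠ 0) (hk : 0 ≤ k) :
    ∫⁻ r in {r : E3 | ‖r‖ ≤ k ∧ k < ‖r - p‖},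
      ENNReal.ofReal (1 / √(‖r - p‖ ^ 2 - ‖r‖ ^ 2) ^ 3)
      ≤ ENNReal.ofReal (π * √(‖p‖ ^ 2 + 2 * ‖p‖ * k) / ‖p‖) := by
  have h := key_shell (-p) k (neg_ne_zero.2 hp) hk
  simpa only [norm_neg, ← sub_eq_add_neg] using h

/-- The dominating kernel. -/
noncomputable def HH (R α : ℝ) (g : E3 → ℝ≥0∞) (p r r' : E3) : ℝ≥0∞ :=
  if ‖p‖ < R then ENNReal.ofReal (α * (1 / √(‖r + p‖ ^ 2 - ‖r‖ ^ 2) ^ 3 *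
    (1 / √(‖r' - p‖ ^ 2 - ‖r'‖ ^ 2) ^ 3))) else g p

lemma HH_meas (R α : ℝ) (g : E3 → ℝ≥0∞) (hg : Measurable g) :
    Measurable (fun q : E3 × E3 × E3 => HH R α g q.1 q.2.1 q.2.2) := by
  unfold HH
  refine Measurable.ite (measurableSet_lt (by fun_prop) (by fun_prop)) (by fun_prop) (by fun_prop)

lemma shell_vol_s12 (k K : ℝ) (hkK : k ≤ K) (s : Set E3) (hs : ∀ r ∈ s, ‖r‖ ≤ k) :
    volume s ≤ ENNReal.ofReal (K ^ 3 * (π * 4 / 3)) := by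
  rcases lt_or_ge K 0 with h | h
  · have : s = ∅ := by
      ext r
      simp only [Set.mem_empty_iff_false, iff_false]
      intro hr
      have := hs r hr
      have := norm_nonneg r
      linarith
    simp [this]
  · calc volume s ≤ volume (Metric.closedBall (0 : E3) K) := by
          apply measure_mono
          intro r hr
          rw [mem_closedBall_zero_iff]
          exact (hs r hr).trans hkK
      _ = _ := by
          rw [EuclideanSpace.volume_closedBall_fin_three, ENNReal.ofReal_mul (by positivity),
            ENNReal.ofReal_pow h]

lemma inner_A (p : E3) (hp : p ≠ 0) (k₁ k₂ K α : ℝ) (hα : 0 ≤ α) (h1 : 0 ≤ k₁) (h2 : 0 ≤ k₂)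
    (h1K : k₁ ≤ K) (h2K : k₂ ≤ K) :
    ∫⁻ r in {r : E3 | ‖r‖ ≤ k₁ ∧ k₁ < ‖r + p‖}, ∫⁻ r' in {r' : E3 | ‖r'‖ ≤ k₂ ∧ k₂ < ‖r' - p‖},
      ENNReal.ofReal (α * (1 / √(‖r + p‖ ^ 2 - ‖r‖ ^ 2) ^ 3 *
        (1 / √(‖r' - p‖ ^ 2 - ‖r'‖ ^ 2) ^ 3)))
      ≤ ENNReal.ofReal (α * π ^ 2 * (1 + 2 * K * (1 / ‖p‖))) := by
  have hP : 0 < ‖p‖ := norm_pos_iff.2 hp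
  have hs : ∀ r r' : E3, ENNReal.ofReal (α * (1 / √(‖r + p‖ ^ 2 - ‖r‖ ^ 2) ^ 3 *
        (1 / √(‖r' - p‖ ^ 2 - ‖r'‖ ^ 2) ^ 3)))
      = ENNReal.ofReal α * (ENNReal.ofReal (1 / √(‖r + p‖ ^ 2 - ‖r‖ ^ 2) ^ 3) *
        ENNReal.ofReal (1 / √(‖r' - p‖ ^ 2 - ‖r'‖ ^ 2) ^ 3)) := by
    intro r r'
    rw [ENNReal.ofReal_mul hα, ENNReal.ofReal_mul (by positivity)]
  simp_rw [hs]
  have e1 : ∀ r : E3, ∫⁻ r' in {r' : E3 | ‖r'‖ ≤ k₂ ∧ k₂ < ‖r' - p‖},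
      ENNReal.ofReal α * (ENNReal.ofReal (1 / √(‖r + p‖ ^ 2 - ‖r‖ ^ 2) ^ 3) *
        ENNReal.ofReal (1 / √(‖r' - p‖ ^ 2 - ‖r'‖ ^ 2) ^ 3))
      ≤ ENNReal.ofReal α * (ENNReal.ofReal (1 / √(‖r + p‖ ^ 2 - ‖r‖ ^ 2) ^ 3) *
        ENNReal.ofReal (π * √(‖p‖ ^ 2 + 2 * ‖p‖ * K) / ‖p‖)) := by
    intro r
    rw [lintegral_const_mul _ (by fun_prop), lintegral_const_mul _ (by fun_prop)]
    gcongr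
    refine (key_shell' p k₂ hp h2).trans ?_
    gcongr
  calc _ ≤ ∫⁻ r in {r : E3 | ‖r‖ ≤ k₁ ∧ k₁ < ‖r + p‖},
      ENNReal.ofReal α * (ENNReal.ofReal (1 / √(‖r + p‖ ^ 2 - ‖r‖ ^ 2) ^ 3) *
        ENNReal.ofReal (π * √(‖p‖ ^ 2 + 2 * ‖p‖ * K) / ‖p‖)) := lintegral_mono e1
    _ ≤ ENNReal.ofReal α * (ENNReal.ofReal (π * √(‖p‖ ^ 2 + 2 * ‖p‖ * K) / ‖p‖) *
        ENNReal.ofReal (π * √(‖p‖ ^ 2 + 2 * ‖p‖ * K) / ‖p‖)) := by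
      rw [lintegral_const_mul _ (by fun_prop), lintegral_mul_const _ (by fun_prop)]
      gcongr
      refine (key_shell p k₁ hp h1).trans ?_
      gcongr
    _ = _ := by
      rw [← ENNReal.ofReal_mul (by positivity), ← ENNReal.ofReal_mul hα]
      congr 1
      have hK : 0 ≤ K := h1.trans h1K
      have h := Real.sq_sqrt (show 0 ≤ ‖p‖ ^ 2 + 2 * ‖p‖ * K by positivity)
      have : π * √(‖p‖ ^ 2 + 2 * ‖p‖ * K) / ‖p‖ * (π * √(‖p‖ ^ 2 + 2 * ‖p‖ * K) / ‖p‖)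
        = π ^ 2 * (√(‖p‖ ^ 2 + 2 * ‖p‖ * K) ^ 2) / ‖p‖ ^ 2 := by field_simp
      rw [this, h]
      field_simp

lemma inner_B (p : E3) (k₁ k₂ K : ℝ) (h1K : k₁ ≤ K) (h2K : k₂ ≤ K) (c : ℝ≥0∞) :
    ∫⁻ _ in {r : E3 | ‖r‖ ≤ k₁ ∧ k₁ < ‖r + p‖}, ∫⁻ _ in {r' : E3 | ‖r'‖ ≤ k₂ ∧ k₂ < ‖r' - p‖},
      c ≤ ENNReal.ofReal (K ^ 3 * (π * 4 / 3)) * ENNReal.ofReal (K ^ 3 * (π * 4 / 3)) * c := by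
  rw [setLIntegral_const, setLIntegral_const]
  have a1 := shell_vol_s12 k₁ K h1K {r : E3 | ‖r‖ ≤ k₁ ∧ k₁ < ‖r + p‖} (fun r hr => hr.1)
  have a2 := shell_vol_s12 k₂ K h2K {r : E3 | ‖r‖ ≤ k₂ ∧ k₂ < ‖r - p‖} (fun r hr => hr.1)
  calc _ ≤ c * ENNReal.ofReal (K ^ 3 * (π * 4 / 3)) * ENNReal.ofReal (K ^ 3 * (π * 4 / 3)) := by
        gcongr
    _ = _ := by ring

lemma total_bound : ∃ c : ℝ, 0 < c ∧ ∀ (k₁ k₂ K R α : ℝ) (g : E3 → ℝ≥0∞), Measurable g →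
    0 ≤ α → 0 ≤ k₁ → 0 ≤ k₂ → k₁ ≤ K → k₂ ≤ K → 0 < R →
    ∫⁻ p : E3, ∫⁻ r in {r : E3 | ‖r‖ ≤ k₁ ∧ k₁ < ‖r + p‖},
      ∫⁻ r' in {r' : E3 | ‖r'‖ ≤ k₂ ∧ k₂ < ‖r' - p‖}, HH R α g p r r'
      ≤ ENNReal.ofReal (α * c * (R ^ 3 + K * R ^ 2)) +
        ENNReal.ofReal (c * K ^ 6) * ∫⁻ p in {p : E3 | R ≤ ‖p‖}, g p := by
  obtain ⟨c1, hc1, hc1'⟩ := lint_inv_ball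
  refine ⟨π ^ 2 * (π * 4 / 3) + 2 * π ^ 2 * c1 + (π * 4 / 3) ^ 2, by positivity, ?_⟩
  intro k₁ k₂ K R α g hg hα h1 h2 h1K h2K hR
  have hK : 0 ≤ K := h1.trans h1K
  have hmS : MeasurableSet {p : E3 | R ≤ ‖p‖} := measurableSet_le (by fun_prop) (by fun_prop)
  have hae : ∀ᵐ p : E3, p ≠ 0 := by
    simp [ae_iff, measure_singleton]
  calc _ ≤ ∫⁻ p : E3, ((Metric.ball (0 : E3) R).indicator
          (fun p => ENNReal.ofReal (α * π ^ 2 * (1 + 2 * K * (1 / ‖p‖)))) p +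
        ENNReal.ofReal (K ^ 3 * (π * 4 / 3)) * ENNReal.ofReal (K ^ 3 * (π * 4 / 3)) *
          ({p : E3 | R ≤ ‖p‖}.indicator g p)) := by
        refine lintegral_mono_ae ?_
        filter_upwards [hae] with p hp
        unfold HH
        by_cases h : ‖p‖ < R
        · simp only [h, if_true]
          rw [Set.indicator_of_mem (by simpa using h)]
          exact (inner_A p hp k₁ k₂ K α hα h1 h2 h1K h2K).trans le_self_add
        · simp only [h, if_false]
          rw [Set.indicator_of_mem (show p ∈ {p : E3 | R ≤ ‖p‖} from not_lt.1 h)]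
          exact (inner_B p k₁ k₂ K h1K h2K (g p)).trans le_add_self
    _ = ENNReal.ofReal (α * π ^ 2) * (volume (Metric.ball (0 : E3) R) + ENNReal.ofReal (2 * K) *
          ∫⁻ p in Metric.ball (0 : E3) R, ENNReal.ofReal (1 / ‖p‖)) +
        ENNReal.ofReal (K ^ 3 * (π * 4 / 3)) * ENNReal.ofReal (K ^ 3 * (π * 4 / 3)) *
          ∫⁻ p in {p : E3 | R ≤ ‖p‖}, g p := by
        rw [lintegral_add_left (Measurable.indicator (by fun_prop) measurableSet_ball),
          lintegral_const_mul _ (hg.indicator hmS), lintegral_indicator hmS,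
          lintegral_indicator measurableSet_ball]
        congr 1
        have : ∀ p : E3, ENNReal.ofReal (α * π ^ 2 * (1 + 2 * K * (1 / ‖p‖)))
          = ENNReal.ofReal (α * π ^ 2) * (1 + ENNReal.ofReal (2 * K) * ENNReal.ofReal (1 / ‖p‖)) := by
          intro p
          rw [ENNReal.ofReal_mul (by positivity), ENNReal.ofReal_add (by positivity) (by positivity),
            ENNReal.ofReal_one, ENNReal.ofReal_mul (p := 2 * K) (by positivity)]
        simp_rw [this]
        rw [lintegral_const_mul _ (by fun_prop), lintegral_add_left (by fun_prop),
          lintegral_const_mul _ (by fun_prop)]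
        simp
    _ ≤ _ := by
        gcongr ?_ + ?_ * _
        · rw [EuclideanSpace.volume_ball_fin_three, ← ENNReal.ofReal_pow hR.le,
            ← ENNReal.ofReal_mul (by positivity)]
          calc _ ≤ ENNReal.ofReal (α * π ^ 2) * (ENNReal.ofReal (R ^ 3 * (π * 4 / 3)) +
                ENNReal.ofReal (2 * K) * ENNReal.ofReal (c1 * R ^ 2)) := by
                  gcongr
                  exact hc1' R hR
            _ = ENNReal.ofReal (α * π ^ 2 * (R ^ 3 * (π * 4 / 3) + 2 * K * (c1 * R ^ 2))) := by
                  rw [← ENNReal.ofReal_mul (by positivity),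
                    ← ENNReal.ofReal_add (by positivity) (by positivity),
                    ← ENNReal.ofReal_mul (by positivity)]
            _ ≤ _ := by
                  apply ENNReal.ofReal_le_ofReal
                  have : α * (π ^ 2 * (π * 4 / 3) + 2 * π ^ 2 * c1 + (π * 4 / 3) ^ 2) *
                      (R ^ 3 + K * R ^ 2) -
                      α * π ^ 2 * (R ^ 3 * (π * 4 / 3) + 2 * K * (c1 * R ^ 2)) =
                      α * ((2 * π ^ 2 * c1 + (π * 4 / 3) ^ 2) * R ^ 3 +
                        (π ^ 2 * (π * 4 / 3) + (π * 4 / 3) ^ 2) * (K * R ^ 2)) := by ring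
                  have : 0 ≤ α * ((2 * π ^ 2 * c1 + (π * 4 / 3) ^ 2) * R ^ 3 +
                        (π ^ 2 * (π * 4 / 3) + (π * 4 / 3) ^ 2) * (K * R ^ 2)) := by positivity
                  linarith
        · rw [← ENNReal.ofReal_mul (by positivity)]
          apply ENNReal.ofReal_le_ofReal
          have : 0 ≤ (π ^ 2 * (π * 4 / 3) + 2 * π ^ 2 * c1) * K ^ 6 := by positivity
          nlinarith

/-- The domain of integration. -/
def DD (k₁ k₂ : ℝ) : Set (E3 × E3 × E3) :=
  {q | (‖q.2.1‖ ≤ k₁ ∧ k₁ < ‖q.2.1 + q.1‖) ∧ (‖q.2.2‖ ≤ k₂ ∧ k₂ < ‖q.2.2 - q.1‖)}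

lemma DD_meas (k₁ k₂ : ℝ) : MeasurableSet (DD k₁ k₂) :=
  (ms_and (f := fun q : E3 × E3 × E3 => ‖q.2.1‖) (g := fun _ => k₁) (h := fun _ => k₁)
    (l := fun q => ‖q.2.1 + q.1‖) (by fun_prop) (by fun_prop) (by fun_prop) (by fun_prop)).inter
  (ms_and (f := fun q : E3 × E3 × E3 => ‖q.2.2‖) (g := fun _ => k₂) (h := fun _ => k₂)
    (l := fun q => ‖q.2.2 - q.1‖) (by fun_prop) (by fun_prop) (by fun_prop) (by fun_prop))

lemma S1_meas (k : ℝ) (p : E3) : MeasurableSet {r : E3 | ‖r‖ ≤ k ∧ k < ‖r + p‖} :=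
  ms_and (by fun_prop) (by fun_prop) (by fun_prop) (by fun_prop)

lemma S2_meas (k : ℝ) (p : E3) : MeasurableSet {r : E3 | ‖r‖ ≤ k ∧ k < ‖r - p‖} :=
  ms_and (by fun_prop) (by fun_prop) (by fun_prop) (by fun_prop)

lemma nested_int (k₁ k₂ : ℝ) (f : E3 → E3 → E3 → ℝ)
    (hf : Integrable ((DD k₁ k₂).indicator fun q => f q.1 q.2.1 q.2.2)) :
    ∫ p : E3, ∫ r in {r : E3 | ‖r‖ ≤ k₁ ∧ k₁ < ‖r + p‖},
      ∫ r' in {r' : E3 | ‖r'‖ ≤ k₂ ∧ k₂ < ‖r' - p‖}, f p r r'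
    = ∫ q, (DD k₁ k₂).indicator (fun q => f q.1 q.2.1 q.2.2) q := by
  rw [Measure.volume_eq_prod] at hf ⊢
  rw [integral_prod _ hf]
  refine integral_congr_ae ?_
  filter_upwards [hf.prod_right_ae] with p hp
  rw [Measure.volume_eq_prod] at hp ⊢
  rw [integral_prod _ hp, ← integral_indicator (S1_meas k₁ p)]
  refine integral_congr_ae (Filter.Eventually.of_forall fun r => ?_)
  by_cases hr : r ∈ {r : E3 | ‖r‖ ≤ k₁ ∧ k₁ < ‖r + p‖}
  · simp only [Set.indicator_of_mem hr]
    rw [← integral_indicator (S2_meas k₂ p)]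
    refine integral_congr_ae (Filter.Eventually.of_forall fun r' => ?_)
    have hr' : ‖r‖ ≤ k₁ ∧ k₁ < ‖r + p‖ := hr
    simp only [Set.indicator, DD, Set.mem_ofPred_eq, hr', true_and, and_self]
    split_ifs <;> rfl
  · simp only [Set.indicator_of_notMem hr]
    rw [integral_eq_zero_of_ae]
    refine Filter.Eventually.of_forall fun r' => ?_
    exact Set.indicator_of_notMem (fun h => hr h.1) _

lemma nested_lint (k₁ k₂ : ℝ) (f : E3 → E3 → E3 → ℝ≥0∞)
    (hf : Measurable fun q : E3 × E3 × E3 => f q.1 q.2.1 q.2.2) :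
    ∫⁻ q, (DD k₁ k₂).indicator (fun q => f q.1 q.2.1 q.2.2) q =
    ∫⁻ p : E3, ∫⁻ r in {r : E3 | ‖r‖ ≤ k₁ ∧ k₁ < ‖r + p‖},
      ∫⁻ r' in {r' : E3 | ‖r'‖ ≤ k₂ ∧ k₂ < ‖r' - p‖}, f p r r' := by
  have hm := hf.indicator (DD_meas k₁ k₂)
  rw [Measure.volume_eq_prod, lintegral_prod _ hm.aemeasurable]
  refine lintegral_congr fun p => ?_
  have hm2 : Measurable (fun y : E3 × E3 =>
      (DD k₁ k₂).indicator (fun q => f q.1 q.2.1 q.2.2) (p, y)) := hm.comp measurable_prodMk_left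
  rw [Measure.volume_eq_prod, lintegral_prod _ hm2.aemeasurable,
    ← lintegral_indicator (S1_meas k₁ p)]
  refine lintegral_congr fun r => ?_
  by_cases hr : r ∈ {r : E3 | ‖r‖ ≤ k₁ ∧ k₁ < ‖r + p‖}
  · simp only [Set.indicator_of_mem hr]
    rw [← lintegral_indicator (S2_meas k₂ p)]
    refine lintegral_congr fun r' => ?_
    have hr' : ‖r‖ ≤ k₁ ∧ k₁ < ‖r + p‖ := hr
    simp only [Set.indicator, DD, Set.mem_ofPred_eq, hr', true_and, and_self]
    split_ifs <;> rfl
  · simp only [Set.indicator_of_notMem hr]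
    refine (lintegral_congr fun r' => ?_).trans lintegral_zero
    exact Set.indicator_of_notMem (fun h => hr h.1) _

lemma x_lower (p r : E3) (k R : ℝ) (hr : ‖r‖ ≤ k) (hR : 4 * k ≤ R) (hp : R ≤ ‖p‖) :
    ‖p‖ ^ 2 / 2 ≤ ‖r + p‖ ^ 2 - ‖r‖ ^ 2 := by
  have h1 : ‖p‖ - ‖r‖ ≤ ‖r + p‖ := by
    have := norm_sub_le (r + p) r
    simp only [add_sub_cancel_left] at this
    linarith
  have h0 := norm_nonneg r
  nlinarith [norm_nonneg p, norm_nonneg (r + p)]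

lemma x_upper (p r : E3) (k R : ℝ) (hr : ‖r‖ ≤ k) (hp : ‖p‖ < R) :
    ‖r + p‖ ^ 2 - ‖r‖ ^ 2 ≤ R ^ 2 + 2 * R * k := by
  have h1 : ‖r + p‖ ≤ ‖r‖ + ‖p‖ := norm_add_le _ _
  have h0 := norm_nonneg r
  have h2 := norm_nonneg p
  have h3 : ‖r + p‖ ^ 2 ≤ (‖r‖ + ‖p‖) ^ 2 := by gcongr
  have h4 : ‖r‖ * ‖p‖ ≤ k * R := by gcongr; linarith
  have h5 : ‖p‖ ^ 2 ≤ R ^ 2 := by gcongr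
  nlinarith

lemma E_cube (x x' : ℝ) (hx : 0 < x) (hx' : 0 < x') :
    1 / (x + x') ^ 3 ≤ (1 / 8) * (1 / √x ^ 3 * (1 / √x' ^ 3)) := by
  have h1 := Real.sqrt_pos.2 hx
  have h2 := Real.sqrt_pos.2 hx'
  have e1 := Real.sq_sqrt hx.le
  have e2 := Real.sq_sqrt hx'.le
  have h : 2 * (√x * √x') ≤ x + x' := by nlinarith [sq_nonneg (√x - √x')]
  have h3 : (2 * (√x * √x')) ^ 3 ≤ (x + x') ^ 3 := by gcongr
  calc 1 / (x + x') ^ 3 ≤ 1 / (2 * (√x * √x')) ^ 3 := by gcongr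
    _ = _ := by field_simp; norm_num

lemma ker_nonneg (e ε c : ℝ) (he : 0 < e) (hε : 0 ≤ ε) (hc : 0 ≤ c) (hc1 : c ≤ 1) :
    0 ≤ 1 / e ^ 2 - c ^ 2 / (e + 2 * ε) ^ 2 := by
  rw [sub_nonneg]
  have : c ^ 2 ≤ 1 := by nlinarith
  gcongr
  linarith

lemma ker_le (e ε c : ℝ) :
    1 / e ^ 2 - c ^ 2 / (e + 2 * ε) ^ 2 ≤ 1 / e ^ 2 := by
  have : 0 ≤ c ^ 2 / (e + 2 * ε) ^ 2 := by positivity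
  linarith

lemma ker_le_eps (e ε : ℝ) (he : 0 < e) (hε : 0 ≤ ε) :
    1 / e ^ 2 - 1 ^ 2 / (e + 2 * ε) ^ 2 ≤ 4 * ε * (1 / e ^ 3) := by
  rw [div_sub_div _ _ (by positivity) (by positivity), mul_one_div,
    div_le_div_iff₀ (by positivity) (by positivity)]
  have : 4 * ε * (e ^ 2 * (e + 2 * ε) ^ 2) - (1 * (e + 2 * ε) ^ 2 - e ^ 2 * 1 ^ 2) * e ^ 3
    = 4 * ε * e ^ 2 * (3 * e * ε + 4 * ε ^ 2) := by ring
  have : 0 ≤ 4 * ε * e ^ 2 * (3 * e * ε + 4 * ε ^ 2) := by positivity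
  linarith

lemma dom_facts (k₁ k₂ K R : ℝ) (h1K : k₁ ≤ K) (h2K : k₂ ≤ K) (hR : 4 * K ≤ R) (p r r' : E3)
    (h1 : 0 ≤ k₁) (h2 : 0 ≤ k₂)
    (hq : (p, r, r') ∈ DD k₁ k₂) :
    0 < ‖r + p‖ ^ 2 - ‖r‖ ^ 2 + ‖r' - p‖ ^ 2 - ‖r'‖ ^ 2 ∧
    1 / (‖r + p‖ ^ 2 - ‖r‖ ^ 2 + ‖r' - p‖ ^ 2 - ‖r'‖ ^ 2) ^ 3 ≤
      (1 / 8) * (1 / √(‖r + p‖ ^ 2 - ‖r‖ ^ 2) ^ 3 * (1 / √(‖r' - p‖ ^ 2 - ‖r'‖ ^ 2) ^ 3)) ∧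
    (‖p‖ < R → ‖r + p‖ ^ 2 - ‖r‖ ^ 2 + ‖r' - p‖ ^ 2 - ‖r'‖ ^ 2 ≤ 2 * (R ^ 2 + 2 * R * K)) ∧
    (R ≤ ‖p‖ → ‖p‖ ^ 2 ≤ ‖r + p‖ ^ 2 - ‖r‖ ^ 2 + ‖r' - p‖ ^ 2 - ‖r'‖ ^ 2) := by
  obtain ⟨⟨a1, a2⟩, ⟨b1, b2⟩⟩ := hq
  simp only at a1 a2 b1 b2
  have hx : 0 < ‖r + p‖ ^ 2 - ‖r‖ ^ 2 := by
    have := norm_nonneg r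
    nlinarith
  have hx' : 0 < ‖r' - p‖ ^ 2 - ‖r'‖ ^ 2 := by
    have := norm_nonneg r'
    nlinarith
  rw [show ‖r + p‖ ^ 2 - ‖r‖ ^ 2 + ‖r' - p‖ ^ 2 - ‖r'‖ ^ 2
    = (‖r + p‖ ^ 2 - ‖r‖ ^ 2) + (‖r' - p‖ ^ 2 - ‖r'‖ ^ 2) by ring]
  refine ⟨by positivity, E_cube _ _ hx hx', fun hp => ?_, fun hp => ?_⟩
  · have u1 := x_upper p r K R (a1.trans h1K) hp
    have u2 := x_upper (-p) r' K R (b1.trans h2K) (by rwa [norm_neg])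
    rw [← sub_eq_add_neg] at u2
    linarith
  · have u1 := x_lower p r K R (a1.trans h1K) hR hp
    have u2 := x_lower (-p) r' K R (b1.trans h2K) hR (by rwa [norm_neg])
    rw [← sub_eq_add_neg, norm_neg] at u2
    linarith

lemma H1_bound (k₁ k₂ K R : ℝ) (h1K : k₁ ≤ K) (h2K : k₂ ≤ K) (hR : 4 * K ≤ R) (hR0 : 0 < R)
    (p r r' : E3) (h1 : 0 ≤ k₁) (h2 : 0 ≤ k₂) (hq : (p, r, r') ∈ DD k₁ k₂) :
    ENNReal.ofReal (1 / (‖r + p‖ ^ 2 - ‖r‖ ^ 2 + ‖r' - p‖ ^ 2 - ‖r'‖ ^ 2) ^ 2) ≤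
      HH R ((R ^ 2 + 2 * R * K) / 4) (fun p => ENNReal.ofReal (1 / ‖p‖ ^ 4)) p r r' := by
  obtain ⟨f1, f2, f3, f4⟩ := dom_facts k₁ k₂ K R h1K h2K hR p r r' h1 h2 hq
  unfold HH
  set e := ‖r + p‖ ^ 2 - ‖r‖ ^ 2 + ‖r' - p‖ ^ 2 - ‖r'‖ ^ 2
  by_cases hp : ‖p‖ < R
  · rw [if_pos hp]
    apply ENNReal.ofReal_le_ofReal
    calc 1 / e ^ 2 = e * (1 / e ^ 3) := by field_simp
      _ ≤ (2 * (R ^ 2 + 2 * R * K)) * ((1 / 8) * (1 / √(‖r + p‖ ^ 2 - ‖r‖ ^ 2) ^ 3 *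
          (1 / √(‖r' - p‖ ^ 2 - ‖r'‖ ^ 2) ^ 3))) := by
          refine mul_le_mul (f3 hp) f2 (by positivity) (f1.le.trans (f3 hp))
      _ = _ := by ring
  · rw [if_neg hp]
    apply ENNReal.ofReal_le_ofReal
    have hp' := not_lt.1 hp
    have hpos : 0 < ‖p‖ := hR0.trans_le hp'
    have h4 := f4 hp'
    rw [show ‖p‖ ^ 4 = (‖p‖ ^ 2) ^ 2 by ring]
    gcongr

/-- majorant in the region of large `p`. -/
noncomputable def gg (T ε : ℝ) (p : E3) : ℝ≥0∞ :=
  ENNReal.ofReal (4 * ε) * ENNReal.ofReal (1 / ‖p‖ ^ 6) +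
    {p : E3 | T ≤ ‖p‖}.indicator (fun p => ENNReal.ofReal (1 / ‖p‖ ^ 4)) p

lemma TT_meas (T : ℝ) : MeasurableSet {p : E3 | T ≤ ‖p‖} :=
  measurableSet_le (by fun_prop) (by fun_prop)

lemma gg_meas (T ε : ℝ) : Measurable (gg T ε) := by
  unfold gg
  have h1 : Measurable ({p : E3 | T ≤ ‖p‖}.indicator
    (fun p : E3 => ENNReal.ofReal (1 / ‖p‖ ^ 4))) := Measurable.indicator (by fun_prop) (TT_meas T)
  have h2 : Measurable (fun p : E3 => ENNReal.ofReal (4 * ε) * ENNReal.ofReal (1 / ‖p‖ ^ 6)) := by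
    fun_prop
  exact h2.add h1

lemma H2_bound (k₁ k₂ K R T ε c : ℝ) (h1K : k₁ ≤ K) (h2K : k₂ ≤ K) (hR : 4 * K ≤ R) (hR0 : 0 < R)
    (hRT : R ≤ T) (hε : 0 ≤ ε)
    (p r r' : E3) (h1 : 0 ≤ k₁) (h2 : 0 ≤ k₂) (hq : (p, r, r') ∈ DD k₁ k₂)
    (hc : ‖p‖ ≤ T → c = 1) :
    ENNReal.ofReal (1 / (‖r + p‖ ^ 2 - ‖r‖ ^ 2 + ‖r' - p‖ ^ 2 - ‖r'‖ ^ 2) ^ 2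
      - c ^ 2 / (‖r + p‖ ^ 2 - ‖r‖ ^ 2 + ‖r' - p‖ ^ 2 - ‖r'‖ ^ 2 + 2 * ε) ^ 2) ≤
      HH R (ε / 2) (gg T ε) p r r' := by
  obtain ⟨f1, f2, f3, f4⟩ := dom_facts k₁ k₂ K R h1K h2K hR p r r' h1 h2 hq
  unfold HH
  set e := ‖r + p‖ ^ 2 - ‖r‖ ^ 2 + ‖r' - p‖ ^ 2 - ‖r'‖ ^ 2
  by_cases hp : ‖p‖ < R
  · rw [if_pos hp, hc (by linarith)]
    apply ENNReal.ofReal_le_ofReal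
    refine (ker_le_eps e ε f1 hε).trans ?_
    calc _ ≤ 4 * ε * ((1 / 8) * (1 / √(‖r + p‖ ^ 2 - ‖r‖ ^ 2) ^ 3 *
          (1 / √(‖r' - p‖ ^ 2 - ‖r'‖ ^ 2) ^ 3))) := by gcongr
      _ = _ := by ring
  · rw [if_neg hp]
    have hp' := not_lt.1 hp
    have hpos : 0 < ‖p‖ := hR0.trans_le hp'
    have h4 := f4 hp'
    unfold gg
    by_cases hT : T ≤ ‖p‖
    · rw [Set.indicator_of_mem (show p ∈ {p : E3 | T ≤ ‖p‖} from hT)]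
      refine le_trans ?_ le_add_self
      apply ENNReal.ofReal_le_ofReal
      refine (ker_le e ε c).trans ?_
      rw [show ‖p‖ ^ 4 = (‖p‖ ^ 2) ^ 2 by ring]
      gcongr
    · refine le_trans ?_ le_self_add
      rw [← ENNReal.ofReal_mul (by positivity), hc (not_le.1 hT).le]
      apply ENNReal.ofReal_le_ofReal
      refine (ker_le_eps e ε f1 hε).trans ?_
      rw [show ‖p‖ ^ 6 = (‖p‖ ^ 2) ^ 3 by ring]
      gcongr

lemma gg_lint : ∃ c : ℝ, 0 < c ∧ ∀ R T ε : ℝ, 0 < R → R ≤ T → 0 ≤ ε →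
    ∫⁻ p in {p : E3 | R ≤ ‖p‖}, gg T ε p ≤ ENNReal.ofReal (c * (ε / R ^ 3 + 1 / T)) := by
  obtain ⟨c4, hc4, h4⟩ := lint_pow_compl 4 le_rfl
  obtain ⟨c6, hc6, h6⟩ := lint_pow_compl 6 (by norm_num)
  refine ⟨c4 + 4 * c6, by positivity, fun R T ε hR hRT hε => ?_⟩
  have hT : 0 < T := hR.trans_le hRT
  unfold gg
  rw [lintegral_add_left (by fun_prop), lintegral_const_mul _ (by fun_prop),
    setLIntegral_indicator (TT_meas T)]
  have hset : {p : E3 | T ≤ ‖p‖} ∩ {p : E3 | R ≤ ‖p‖} = {p : E3 | T ≤ ‖p‖} := by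
    apply Set.inter_eq_left.2
    intro p hp
    exact hRT.trans hp
  rw [hset]
  calc _ ≤ ENNReal.ofReal (4 * ε) * ENNReal.ofReal (c6 * (R ^ 3 / R ^ 6)) +
        ENNReal.ofReal (c4 * (T ^ 3 / T ^ 4)) := by
        gcongr
        · exact h6 R hR
        · exact h4 T hT
    _ = ENNReal.ofReal (4 * ε * (c6 * (R ^ 3 / R ^ 6)) + c4 * (T ^ 3 / T ^ 4)) := by
        rw [← ENNReal.ofReal_mul (by positivity), ← ENNReal.ofReal_add (by positivity)
          (by positivity)]
    _ ≤ _ := by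
        apply ENNReal.ofReal_le_ofReal
        rw [show R ^ 3 / R ^ 6 = 1 / R ^ 3 by field_simp, show T ^ 3 / T ^ 4 = 1 / T by field_simp]
        have a1 : 0 ≤ c4 * (ε / R ^ 3) := by positivity
        have a2 : 0 ≤ c6 * (1 / T) := by positivity
        have a3 : 4 * ε * (c6 * (1 / R ^ 3)) = 4 * (c6 * (ε / R ^ 3)) := by ring
        rw [a3]
        nlinarith

lemma G_ae (G : E3 → ℝ) : ∀ᵐ y : E3, ‖G y‖ₑ ≤ eLpNorm G ⊤ volume := by
  rw [eLpNorm_exponent_top]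
  exact ae_le_eLpNormEssSup

lemma W_le (a b c d : ℝ) (N : ℝ≥0∞) (ha : ‖a‖ₑ ≤ N) (hb : ‖b‖ₑ ≤ N) (hc : ‖c‖ₑ ≤ N)
    (hd : ‖d‖ₑ ≤ N) : ‖a + b + c + d‖ₑ ≤ 4 * N := by
  calc ‖a + b + c + d‖ₑ ≤ ‖a‖ₑ + ‖b‖ₑ + ‖c‖ₑ + ‖d‖ₑ := by
        refine (enorm_add_le _ _).trans ?_
        gcongr
        refine (enorm_add_le _ _).trans ?_
        gcongr
        exact enorm_add_le _ _
    _ ≤ N + N + N + N := by gcongr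
    _ = 4 * N := by ring

lemma main_est : ∃ c : ℝ, 0 < c ∧ ∀ (k₁ k₂ K R T ε : ℝ) (χ G : E3 → ℝ),
    0 ≤ k₁ → 0 ≤ k₂ → k₁ ≤ K → k₂ ≤ K → 4 * K ≤ R → 0 < R → R ≤ T → 0 ≤ ε →
    Measurable χ → (∀ p, 0 ≤ χ p ∧ χ p ≤ 1) → (∀ p, ‖p‖ ≤ T → χ p = 1) →
    Measurable G → (∃ M : ℝ, ∀ y, |G y| ≤ M) →
    ENNReal.ofReal
      |(∫ p : E3, ∫ r in {r : E3 | ‖r‖ ≤ k₁ ∧ k₁ < ‖r + p‖},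
              ∫ r' in {r' : E3 | ‖r'‖ ≤ k₂ ∧ k₂ < ‖r' - p‖},
                (G (r + p) + G (-r) + G (r' - p) + G (-r')) /
                  (‖r + p‖ ^ 2 - ‖r‖ ^ 2 + ‖r' - p‖ ^ 2 - ‖r'‖ ^ 2) ^ 2)
          - (∫ p : E3, ∫ r in {r : E3 | ‖r‖ ≤ k₁ ∧ k₁ < ‖r + p‖},
              ∫ r' in {r' : E3 | ‖r'‖ ≤ k₂ ∧ k₂ < ‖r' - p‖},
                (G (r + p) + G (-r) + G (r' - p) + G (-r')) * χ p ^ 2 /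
                  (‖r + p‖ ^ 2 - ‖r‖ ^ 2 + ‖r' - p‖ ^ 2 - ‖r'‖ ^ 2
                    + 2 * ε) ^ 2)|
      ≤ ENNReal.ofReal (c * (ε * (R ^ 3 + K * R ^ 2) + K ^ 6 * (ε / R ^ 3 + 1 / T))) *
        eLpNorm G ⊤ volume := by
  obtain ⟨c1, hc1, htot⟩ := total_bound
  obtain ⟨c2, hc2, hgg⟩ := gg_lint
  obtain ⟨c4, hc4, h4⟩ := lint_pow_compl 4 le_rfl
  refine ⟨4 * (c1 + c1 * c2), by positivity, ?_⟩
  intro k₁ k₂ K R T ε χ G h1 h2 h1K h2K hKR hR hRT hε hχm hχ hχ1 hGm hGb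
  obtain ⟨M, hM⟩ := hGb
  have hK : 0 ≤ K := h1.trans h1K
  have hT : 0 < T := hR.trans_le hRT
  -- integrability
  have hi1 : Integrable ((DD k₁ k₂).indicator fun q : E3 × E3 × E3 =>
      (fun p r r' : E3 => (G (r + p) + G (-r) + G (r' - p) + G (-r')) /
        (‖r + p‖ ^ 2 - ‖r‖ ^ 2 + ‖r' - p‖ ^ 2 - ‖r'‖ ^ 2) ^ 2) q.1 q.2.1 q.2.2) := by
    refine ⟨(Measurable.indicator (by fun_prop) (DD_meas k₁ k₂)).aestronglyMeasurable, ?_⟩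
    have hHm := HH_meas R ((R ^ 2 + 2 * R * K) / 4) (fun p => ENNReal.ofReal (1 / ‖p‖ ^ 4))
      (by fun_prop)
    have hle : ∀ q : E3 × E3 × E3, ‖(DD k₁ k₂).indicator (fun q : E3 × E3 × E3 =>
      (fun p r r' : E3 => (G (r + p) + G (-r) + G (r' - p) + G (-r')) /
        (‖r + p‖ ^ 2 - ‖r‖ ^ 2 + ‖r' - p‖ ^ 2 - ‖r'‖ ^ 2) ^ 2) q.1 q.2.1 q.2.2) q‖ₑ ≤
        (4 * ENNReal.ofReal M) * (DD k₁ k₂).indicator (fun q => HH R ((R ^ 2 + 2 * R * K) / 4)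
          (fun p => ENNReal.ofReal (1 / ‖p‖ ^ 4)) q.1 q.2.1 q.2.2) q := by
      rintro ⟨p, r, r'⟩
      by_cases hq : (p, r, r') ∈ DD k₁ k₂
      · rw [Set.indicator_of_mem hq, Set.indicator_of_mem hq]
        simp only
        have hG : ∀ y, ‖G y‖ₑ ≤ ENNReal.ofReal M := by
          intro y
          rw [Real.enorm_eq_ofReal_abs]
          exact ENNReal.ofReal_le_ofReal (hM y)
        rw [div_eq_mul_one_div, enorm_mul]
        refine mul_le_mul' (W_le _ _ _ _ _ (hG _) (hG _) (hG _) (hG _)) ?_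
        rw [Real.enorm_of_nonneg (by positivity)]
        exact H1_bound k₁ k₂ K R h1K h2K hKR hR p r r' h1 h2 hq
      · rw [Set.indicator_of_notMem hq]
        simp
    unfold HasFiniteIntegral
    refine (lintegral_mono hle).trans_lt ?_
    rw [lintegral_const_mul _ (hHm.indicator (DD_meas k₁ k₂)), nested_lint k₁ k₂ _ hHm]
    refine ENNReal.mul_lt_top (by finiteness) ?_
    refine (htot k₁ k₂ K R _ _ (by fun_prop) (by positivity) h1 h2 h1K h2K hR).trans_lt ?_
    refine ENNReal.add_lt_top.2 ⟨by finiteness, ENNReal.mul_lt_top (by finiteness) ?_⟩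
    exact (h4 R hR).trans_lt (by finiteness)
  have hi2 : Integrable ((DD k₁ k₂).indicator fun q : E3 × E3 × E3 =>
      (fun p r r' : E3 => (G (r + p) + G (-r) + G (r' - p) + G (-r')) * χ p ^ 2 /
        (‖r + p‖ ^ 2 - ‖r‖ ^ 2 + ‖r' - p‖ ^ 2 - ‖r'‖ ^ 2 + 2 * ε) ^ 2) q.1 q.2.1 q.2.2) := by
    refine hi1.mono (Measurable.indicator (by fun_prop) (DD_meas k₁ k₂)).aestronglyMeasurable ?_
    refine Filter.Eventually.of_forall ?_
    rintro ⟨p, r, r'⟩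
    by_cases hq : (p, r, r') ∈ DD k₁ k₂
    · rw [Set.indicator_of_mem hq, Set.indicator_of_mem hq]
      simp only
      obtain ⟨f1, -, -, -⟩ := dom_facts k₁ k₂ K R h1K h2K hKR p r r' h1 h2 hq
      rw [div_eq_mul_one_div (G (r + p) + G (-r) + G (r' - p) + G (-r')), mul_div_assoc,
        norm_mul, norm_mul]
      refine mul_le_mul_of_nonneg_left ?_ (norm_nonneg _)
      rw [Real.norm_of_nonneg (by positivity), Real.norm_of_nonneg (by positivity)]
      have := ker_nonneg _ ε (χ p) f1 hε (hχ p).1 (hχ p).2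
      linarith
    · rw [Set.indicator_of_notMem hq, Set.indicator_of_notMem hq]
  rw [nested_int k₁ k₂ (fun p r r' : E3 => (G (r + p) + G (-r) + G (r' - p) + G (-r')) /
        (‖r + p‖ ^ 2 - ‖r‖ ^ 2 + ‖r' - p‖ ^ 2 - ‖r'‖ ^ 2) ^ 2) hi1,
    nested_int k₁ k₂ (fun p r r' : E3 => (G (r + p) + G (-r) + G (r' - p) + G (-r')) * χ p ^ 2 /
        (‖r + p‖ ^ 2 - ‖r‖ ^ 2 + ‖r' - p‖ ^ 2 - ‖r'‖ ^ 2 + 2 * ε) ^ 2) hi2,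
    ← integral_sub hi1 hi2, ← Real.enorm_eq_ofReal_abs]
  refine (enorm_integral_le_lintegral_enorm _).trans ?_
  set N := eLpNorm G ⊤ volume with hN
  have hker : ∀ q : E3 × E3 × E3,
      ‖(DD k₁ k₂).indicator (fun q : E3 × E3 × E3 =>
      (fun p r r' : E3 => (G (r + p) + G (-r) + G (r' - p) + G (-r')) /
        (‖r + p‖ ^ 2 - ‖r‖ ^ 2 + ‖r' - p‖ ^ 2 - ‖r'‖ ^ 2) ^ 2) q.1 q.2.1 q.2.2) q -
      (DD k₁ k₂).indicator (fun q : E3 × E3 × E3 =>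
      (fun p r r' : E3 => (G (r + p) + G (-r) + G (r' - p) + G (-r')) * χ p ^ 2 /
        (‖r + p‖ ^ 2 - ‖r‖ ^ 2 + ‖r' - p‖ ^ 2 - ‖r'‖ ^ 2 + 2 * ε) ^ 2) q.1 q.2.1 q.2.2) q‖ₑ ≤
      (DD k₁ k₂).indicator (fun q : E3 × E3 × E3 =>
        (fun p r r' : E3 => ‖G (r + p) + G (-r) + G (r' - p) + G (-r')‖ₑ *
          HH R (ε / 2) (gg T ε) p r r') q.1 q.2.1 q.2.2) q := by
    rintro ⟨p, r, r'⟩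
    by_cases hq : (p, r, r') ∈ DD k₁ k₂
    · rw [Set.indicator_of_mem hq, Set.indicator_of_mem hq, Set.indicator_of_mem hq]
      simp only
      obtain ⟨f1, -, -, -⟩ := dom_facts k₁ k₂ K R h1K h2K hKR p r r' h1 h2 hq
      rw [div_eq_mul_one_div (G (r + p) + G (-r) + G (r' - p) + G (-r')), mul_div_assoc,
        ← mul_sub, enorm_mul]
      gcongr
      rw [Real.enorm_of_nonneg (ker_nonneg _ ε (χ p) f1 hε (hχ p).1 (hχ p).2)]
      exact H2_bound k₁ k₂ K R T ε (χ p) h1K h2K hKR hR hRT hε p r r' h1 h2 hq (hχ1 p)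
    · rw [Set.indicator_of_notMem hq, Set.indicator_of_notMem hq]
      simp
  have hHm := HH_meas R (ε / 2) (gg T ε) (gg_meas T ε)
  refine (lintegral_mono hker).trans ?_
  have hGW : Measurable (fun q : E3 × E3 × E3 =>
      ‖G (q.2.1 + q.1) + G (-q.2.1) + G (q.2.2 - q.1) + G (-q.2.2)‖ₑ) := by fun_prop
  rw [nested_lint k₁ k₂ (fun p r r' : E3 => ‖G (r + p) + G (-r) + G (r' - p) + G (-r')‖ₑ *
          HH R (ε / 2) (gg T ε) p r r') (hGW.mul hHm)]
  calc _ ≤ ∫⁻ p : E3, ∫⁻ r in {r : E3 | ‖r‖ ≤ k₁ ∧ k₁ < ‖r + p‖},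
      ∫⁻ r' in {r' : E3 | ‖r'‖ ≤ k₂ ∧ k₂ < ‖r' - p‖},
        (4 * N) * HH R (ε / 2) (gg T ε) p r r' := by
        refine lintegral_mono fun p => lintegral_mono_ae ?_
        have g1 : ∀ᵐ r : E3, ‖G (r + p)‖ₑ ≤ N :=
          (measurePreserving_add_right volume p).quasiMeasurePreserving.ae (G_ae G)
        have g2 : ∀ᵐ r : E3, ‖G (-r)‖ₑ ≤ N :=
          (Measure.measurePreserving_neg volume).quasiMeasurePreserving.ae (G_ae G)
        have g3 : ∀ᵐ r : E3, ‖G (r - p)‖ₑ ≤ N :=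
          (measurePreserving_sub_right volume p).quasiMeasurePreserving.ae (G_ae G)
        filter_upwards [ae_restrict_of_ae g1, ae_restrict_of_ae g2] with r k1 k2
        refine lintegral_mono_ae ?_
        filter_upwards [ae_restrict_of_ae g3, ae_restrict_of_ae g2] with r' k3 k4
        gcongr
        exact W_le _ _ _ _ _ k1 k2 k3 k4
    _ = (4 * N) * ∫⁻ p : E3, ∫⁻ r in {r : E3 | ‖r‖ ≤ k₁ ∧ k₁ < ‖r + p‖},
      ∫⁻ r' in {r' : E3 | ‖r'‖ ≤ k₂ ∧ k₂ < ‖r' - p‖}, HH R (ε / 2) (gg T ε) p r r' := by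
        rw [← nested_lint k₁ k₂ _ hHm, ← lintegral_const_mul _ (hHm.indicator (DD_meas k₁ k₂)),
          ← nested_lint k₁ k₂ (fun p r r' => (4 * N) * HH R (ε / 2) (gg T ε) p r r')
            (hHm.const_mul _)]
        refine lintegral_congr fun q => ?_
        by_cases hq : q ∈ DD k₁ k₂
        · rw [Set.indicator_of_mem hq, Set.indicator_of_mem hq]
        · rw [Set.indicator_of_notMem hq, Set.indicator_of_notMem hq, mul_zero]
    _ ≤ (4 * N) * (ENNReal.ofReal (ε / 2 * c1 * (R ^ 3 + K * R ^ 2)) +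
        ENNReal.ofReal (c1 * K ^ 6) * ENNReal.ofReal (c2 * (ε / R ^ 3 + 1 / T))) := by
        gcongr
        refine (htot k₁ k₂ K R (ε / 2) _ (gg_meas T ε) (by positivity) h1 h2 h1K h2K hR).trans ?_
        gcongr
        exact hgg R T ε hR hRT hε
    _ = ENNReal.ofReal (4 * (ε / 2 * c1 * (R ^ 3 + K * R ^ 2) +
          c1 * K ^ 6 * (c2 * (ε / R ^ 3 + 1 / T)))) * N := by
        rw [← ENNReal.ofReal_mul (by positivity), ← ENNReal.ofReal_add (by positivity)
          (by positivity), ENNReal.ofReal_mul (p := 4) (by norm_num), ENNReal.ofReal_ofNat]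
        ring
    _ ≤ _ := by
        gcongr ENNReal.ofReal ?_ * _
        have a1 : 0 ≤ c1 * (ε * (R ^ 3 + K * R ^ 2)) := by positivity
        have a2 : 0 ≤ c1 * (K ^ 6 * (ε / R ^ 3 + 1 / T)) := by positivity
        have a3 : 0 ≤ c1 * c2 * (ε * (R ^ 3 + K * R ^ 2)) := by positivity
        nlinarith

/-- Lemma 5.5 (removal of regularizations): the `ε`- and `χ_<`-regularized constant `𝒞` agrees
with Belyakov's formula `n^{Bel}` up to an error `C ‖G‖_∞ ρ^{5/3+1/9}`, for all sufficiently
small densities `ρ`, Fermi momenta `k₁, k₂` of order `ρ^{1/3}`, a low-momentum cutoff `χ`, and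
any bounded measurable `G`. -/
theorem remove_regularizations
    (δ c₀ C₀ a : ℝ) (hδ : 2 / 9 < δ) (hc₀ : 0 < c₀) (hC₀ : 0 < C₀) (ha : 0 < a) :
    ∃ ρ₀ C : ℝ, 0 < ρ₀ ∧ 0 < C ∧
    ∀ (ρ k₁ k₂ : ℝ) (χ : E3 → ℝ) (G : E3 → ℝ),
      0 < ρ → ρ ≤ ρ₀ →
      c₀ * ρ ^ ((1 : ℝ) / 3) ≤ k₁ → k₁ ≤ C₀ * ρ ^ ((1 : ℝ) / 3) →
      c₀ * ρ ^ ((1 : ℝ) / 3) ≤ k₂ → k₂ ≤ C₀ * ρ ^ ((1 : ℝ) / 3) →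
      Measurable χ → (∀ p, 0 ≤ χ p ∧ χ p ≤ 1) →
      (∀ p : E3, ‖p‖ ≤ 4 * ρ ^ ((2 : ℝ) / 9) → χ p = 1) →
      (∀ p : E3, 5 * ρ ^ ((2 : ℝ) / 9) ≤ ‖p‖ → χ p = 0) →
      Measurable G → (∃ M : ℝ, ∀ y, |G y| ≤ M) →
      ENNReal.ofReal
        |(a ^ 2 / π ^ 4) *
            (∫ p : E3, ∫ r in {r : E3 | ‖r‖ ≤ k₁ ∧ k₁ < ‖r + p‖},
              ∫ r' in {r' : E3 | ‖r'‖ ≤ k₂ ∧ k₂ < ‖r' - p‖},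
                (G (r + p) + G (-r) + G (r' - p) + G (-r')) /
                  (‖r + p‖ ^ 2 - ‖r‖ ^ 2 + ‖r' - p‖ ^ 2 - ‖r'‖ ^ 2) ^ 2)
          - (a ^ 2 / π ^ 4) *
            (∫ p : E3, ∫ r in {r : E3 | ‖r‖ ≤ k₁ ∧ k₁ < ‖r + p‖},
              ∫ r' in {r' : E3 | ‖r'‖ ≤ k₂ ∧ k₂ < ‖r' - p‖},
                (G (r + p) + G (-r) + G (r' - p) + G (-r')) * χ p ^ 2 /
                  (‖r + p‖ ^ 2 - ‖r‖ ^ 2 + ‖r' - p‖ ^ 2 - ‖r'‖ ^ 2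
                    + 2 * ρ ^ ((2 : ℝ) / 3 + δ)) ^ 2)|
        ≤ ENNReal.ofReal (C * ρ ^ ((5 : ℝ) / 3 + (1 : ℝ) / 9)) * eLpNorm G ⊤ volume := by
  obtain ⟨c, hc, hmain⟩ := main_est
  refine ⟨(1 + C₀) ^ (-9 : ℝ), a ^ 2 / π ^ 4 * (c * (80 * C₀ ^ 3 + C₀ ^ 3 / 64 + C₀ ^ 6 / 4)),
    by positivity, by positivity, ?_⟩
  intro ρ k₁ k₂ χ G hρ hρ₀ h1 h1' h2 h2' hχm hχ hχ1 hχ0 hGm hGb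
  have hs : 0 < ρ ^ ((1 : ℝ) / 3) := by positivity
  have hk1 : 0 ≤ k₁ := le_trans (by positivity) h1
  have hk2 : 0 ≤ k₂ := le_trans (by positivity) h2
  have hρ1 : ρ ≤ 1 := hρ₀.trans (Real.rpow_le_one_of_one_le_of_nonpos (by linarith) (by norm_num))
  have hRT : 4 * (C₀ * ρ ^ ((1 : ℝ) / 3)) ≤ 4 * ρ ^ ((2 : ℝ) / 9) := by
    have e1 : ρ ^ ((1 : ℝ) / 3) = ρ ^ ((1 : ℝ) / 9) * ρ ^ ((2 : ℝ) / 9) := by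
      rw [← Real.rpow_add hρ]
      norm_num
    have e2 : ρ ^ ((1 : ℝ) / 9) ≤ (1 + C₀)⁻¹ := by
      calc ρ ^ ((1 : ℝ) / 9) ≤ ((1 + C₀) ^ (-9 : ℝ)) ^ ((1 : ℝ) / 9) := by gcongr
        _ = (1 + C₀)⁻¹ := by
          rw [← Real.rpow_mul (by positivity), ← Real.rpow_neg_one]
          norm_num
    have e3 : C₀ * ρ ^ ((1 : ℝ) / 9) ≤ 1 := by
      calc C₀ * ρ ^ ((1 : ℝ) / 9) ≤ C₀ * (1 + C₀)⁻¹ := by gcongr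
        _ ≤ 1 := by
          rw [← div_eq_mul_inv, div_le_one (by positivity)]
          linarith
    have e4 : 0 < ρ ^ ((2 : ℝ) / 9) := by positivity
    rw [e1]
    nlinarith
  have hm := hmain k₁ k₂ (C₀ * ρ ^ ((1 : ℝ) / 3)) (4 * (C₀ * ρ ^ ((1 : ℝ) / 3)))
    (4 * ρ ^ ((2 : ℝ) / 9)) (ρ ^ ((2 : ℝ) / 3 + δ)) χ G hk1 hk2 h1' h2' le_rfl (by positivity)
    hRT (by positivity) hχm hχ hχ1 hGm hGb
  rw [← mul_sub, abs_mul, abs_of_pos (show 0 < a ^ 2 / π ^ 4 by positivity),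
    ENNReal.ofReal_mul (by positivity)]
  refine (mul_le_mul_right hm _).trans ?_
  rw [← mul_assoc, ← ENNReal.ofReal_mul (by positivity)]
  gcongr ENNReal.ofReal ?_ * _
  rw [mul_assoc (a ^ 2 / π ^ 4), mul_assoc c]
  gcongr
  have q3 : (ρ ^ ((1 : ℝ) / 3)) ^ 3 = ρ := by
    rw [← Real.rpow_natCast, ← Real.rpow_mul hρ.le]
    norm_num
  have q1 : ρ ^ ((2 : ℝ) / 3 + δ) * ρ ≤ ρ ^ ((5 : ℝ) / 3 + (1 : ℝ) / 9) := by
    calc ρ ^ ((2 : ℝ) / 3 + δ) * ρ = ρ ^ ((2 : ℝ) / 3 + δ + 1) := by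
          rw [Real.rpow_add_one hρ.ne']
      _ ≤ _ := Real.rpow_le_rpow_of_exponent_ge hρ hρ1 (by linarith)
  have q2 : ρ ^ 2 / ρ ^ ((2 : ℝ) / 9) = ρ ^ ((5 : ℝ) / 3 + (1 : ℝ) / 9) := by
    rw [← Real.rpow_natCast, ← Real.rpow_sub hρ]
    norm_num
  set s := ρ ^ ((1 : ℝ) / 3)
  set ε := ρ ^ ((2 : ℝ) / 3 + δ)
  set t := ρ ^ ((2 : ℝ) / 9) with ht
  have ht0 : 0 < t := by positivity
  have w1 : ε * ((4 * (C₀ * s)) ^ 3 + C₀ * s * (4 * (C₀ * s)) ^ 2) = 80 * C₀ ^ 3 * (ε * ρ) := by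
    rw [← q3]; ring
  have w2 : (C₀ * s) ^ 6 * (ε / (4 * (C₀ * s)) ^ 3 + 1 / (4 * t))
      = C₀ ^ 3 / 64 * (ε * ρ) + C₀ ^ 6 / 4 * (ρ ^ 2 / t) := by
    rw [← q3]
    field_simp
    ring
  rw [w1, w2, q2]
  calc _ ≤ 80 * C₀ ^ 3 * ρ ^ ((5 : ℝ) / 3 + (1 : ℝ) / 9) +
        (C₀ ^ 3 / 64 * ρ ^ ((5 : ℝ) / 3 + (1 : ℝ) / 9) +
          C₀ ^ 6 / 4 * ρ ^ ((5 : ℝ) / 3 + (1 : ℝ) / 9)) := by gcongr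
    _ = _ := by ring
end
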